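/- arXiv:1005.2216 — 4 statements merged into one kernel-verified Lean document; each statement's English description precedes it below -/
import Mathlib

section
/- Let p ∈ S_ℓ with k = ℓ−2. If p is a Baxter permutation then s_n^k(p) = binomial(n,k) for each n ≥ k; if p is not a Baxter permutation, then s_n^k(p) < binomial(n,k) for each n ≥ k+3. In particular, all Baxter permutations of length ℓ are strongly k-Wilf equivalent. -/
open Finset

/-- The word `σ` contains the pattern `p`: there is a subsequence of `σ`
order-isomorphic to `p`. -/
def ContainsPat {n ℓ : ℕ} {α β : Type*} [LinearOrder α] [LinearOrder β]
    (σ : Fin n → α) (p : Fin ℓ → β) : Prop :=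
  ∃ g : Fin ℓ → Fin n, StrictMono g ∧ ∀ a b : Fin ℓ, σ (g a) < σ (g b) ↔ p a < p b

/-- `σ ∈ S_n` is an extension of the partial permutation `π`: on the non-hole
positions, the relative order of the values of `σ` matches that of `π`. -/
def IsExtension {n : ℕ} {α : Type*} [LinearOrder α]
    (σ : Equiv.Perm (Fin n)) (π : Fin n → Option α) : Prop :=
  ∀ i j : Fin n, ∀ vi vj : α, π i = some vi → π j = some vj → (σ i < σ j ↔ vi < vj)

/-- The partial permutation `π` avoids the pattern `p`: every extension avoids `p`. -/
def PPAvoids {n ℓ : ℕ} {α β : Type*} [LinearOrder α] [LinearOrder β]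
    (π : Fin n → Option α) (p : Fin ℓ → β) : Prop :=
  ∀ σ : Equiv.Perm (Fin n), IsExtension σ π → ¬ ContainsPat (⇑σ) p

/-- `π` is a partial permutation of length `n` with `k` holes: each value of
`{1,…,n-k}` appears exactly once and there are exactly `k` holes. -/
def IsPPerm {n : ℕ} (k : ℕ) (π : Fin n → Option (Fin (n - k))) : Prop :=
  (Finset.univ.filter fun i => π i = none).card = k ∧
    ∀ v : Fin (n - k), ∃! i : Fin n, π i = some v

/-- `π` is a partial permutation whose holes are exactly at the positions in `H`. -/
def IsPPermH {n : ℕ} (H : Finset (Fin n)) (π : Fin n → Option (Fin (n - H.card))) : Prop :=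
  (∀ i, π i = none ↔ i ∈ H) ∧ ∀ v : Fin (n - H.card), ∃! i : Fin n, π i = some v

/-- `s_n^k(p)`: the number of `p`-avoiding partial permutations of length `n`
with `k` holes. -/
noncomputable def snk (n k : ℕ) {ℓ : ℕ} (p : Fin ℓ → Fin ℓ) : ℕ :=
  Nat.card {π : Fin n → Option (Fin (n - k)) // IsPPerm k π ∧ PPAvoids π p}

/-- `s_n^H(p)`: the number of `p`-avoiding partial permutations of length `n`
with hole set `H`. -/
noncomputable def snH {n ℓ : ℕ} (H : Finset (Fin n)) (p : Fin ℓ → Fin ℓ) : ℕ :=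
  Nat.card {π : Fin n → Option (Fin (n - H.card)) // IsPPermH H π ∧ PPAvoids π p}

/-- The number of permutations of length `m` avoiding the pattern `p`. -/
noncomputable def avoidCount (m : ℕ) {ℓ : ℕ} (p : Fin ℓ → Fin ℓ) : ℕ :=
  Nat.card {σ : Equiv.Perm (Fin m) // ¬ ContainsPat (⇑σ) p}

/-- `p` is a Baxter permutation: no indices `a < b < c = b+1 < d` such that
`(p a, p b, p c, p d)` is order-isomorphic to `2413` or `3142`. -/
def IsBaxter {ℓ : ℕ} (p : Fin ℓ → Fin ℓ) : Prop :=
  ¬ ∃ a b c d : Fin ℓ, a < b ∧ (b : ℕ) + 1 = (c : ℕ) ∧ c < d ∧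
    ((p c < p a ∧ p a < p d ∧ p d < p b) ∨ (p b < p d ∧ p d < p a ∧ p a < p c))

/-- natural-number version of a word -/
def pN {ℓ : ℕ} (p : Fin ℓ → Fin ℓ) (a : ℕ) : ℕ := if h : a < ℓ then (p ⟨a, h⟩ : ℕ) else 0

/-- number of elements of `S` below `x` -/
def rk {n : ℕ} (S : Finset (Fin n)) (x : ℕ) : ℕ := (S.filter fun y : Fin n => (y : ℕ) < x).card

lemma pN_val {ℓ : ℕ} (p : Fin ℓ → Fin ℓ) (a : Fin ℓ) : pN p a = (p a : ℕ) := by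
  simp [pN]

lemma pN_inj {ℓ : ℕ} {p : Fin ℓ → Fin ℓ} (hp : Function.Injective p) {a b : ℕ}
    (ha : a < ℓ) (hb : b < ℓ) (h : pN p a = pN p b) : a = b := by
  simp only [pN, ha, hb, dif_pos] at h
  have := hp (Fin.ext h)
  simpa using this

lemma rk_mono {n : ℕ} (S : Finset (Fin n)) {x y : ℕ} (h : x ≤ y) : rk S x ≤ rk S y := by
  unfold rk
  apply Finset.card_le_card
  intro z hz
  simp only [Finset.mem_filter] at hz ⊢
  exact ⟨hz.1, by omega⟩

lemma rk_le {n : ℕ} (S : Finset (Fin n)) (x : ℕ) : rk S x ≤ S.card :=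
  Finset.card_le_card (Finset.filter_subset _ _)

lemma rk_lt {n : ℕ} (S : Finset (Fin n)) {x : Fin n} {y : ℕ} (hx : x ∈ S) (h : (x : ℕ) < y) :
    rk S x < rk S y := by
  unfold rk
  apply Finset.card_lt_card
  rw [Finset.ssubset_iff_of_subset]
  · exact ⟨x, by simp [hx, h], by simp⟩
  · intro z hz
    simp only [Finset.mem_filter] at hz ⊢
    exact ⟨hz.1, by omega⟩

lemma exists_rank {n : ℕ} {α : Type*} [LinearOrder α] (f : Fin n → α)
    (hf : Function.Injective f) :
    ∃ σ : Equiv.Perm (Fin n), ∀ x y, σ x < σ y ↔ f x < f y := by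
  have hm : StrictMono (f ∘ Tuple.sort f) :=
    (Tuple.monotone_sort f).strictMono_of_injective (hf.comp (Tuple.sort f).injective)
  refine ⟨(Tuple.sort f).symm, fun x y => ?_⟩
  rw [← hm.lt_iff_lt]
  simp

lemma rk_orderEmb {n m : ℕ} (S : Finset (Fin n)) (hS : S.card = m) (a : Fin m) :
    rk S (S.orderEmbOfFin hS a) = a := by
  unfold rk
  have : (S.filter fun y : Fin n => (y : ℕ) < (S.orderEmbOfFin hS a : Fin n)) =
      (Finset.Iio a).map (S.orderEmbOfFin hS).toEmbedding := by
    ext y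
    simp only [Finset.mem_filter, Finset.mem_map, Finset.mem_Iio]
    constructor
    · rintro ⟨hy, hlt⟩
      have : y ∈ Set.range (S.orderEmbOfFin hS) := by
        rw [Finset.range_orderEmbOfFin]; exact hy
      obtain ⟨b, rfl⟩ := this
      exact ⟨b, (S.orderEmbOfFin hS).lt_iff_lt.1 hlt, rfl⟩
    · rintro ⟨b, hb, rfl⟩
      exact ⟨Finset.orderEmbOfFin_mem _ _ _, (S.orderEmbOfFin hS).lt_iff_lt.2 hb⟩
  rw [this, Finset.card_map, Fin.card_Iio]

lemma core_contains {n k m : ℕ} {p : Fin (k + 2) → Fin (k + 2)} (hp : Function.Injective p)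
    {H S : Finset (Fin n)} {π : Fin n → Option (Fin m)}
    (hH : ∀ i, π i = none ↔ i ∈ H)
    (hinj : ∀ x y v, π x = some v → π y = some v → x = y)
    {u w : Fin n} {vu vw : Fin m} (hu : π u = some vu) (hw : π w = some vw) (hv : vu < vw)
    (hSdef : S = insert u (insert w H)) (hS : S.card = k + 2)
    (hlt : pN p (rk S u) < pN p (rk S w)) : ¬ PPAvoids π p := by
  intro hav
  let g := S.orderEmbOfFin hS
  let f : Fin n → ℕ ×ₗ ℕ := fun x => match π x with
    | none => toLex (pN p (rk S x), 0)
    | some v => toLex (if v ≤ vu then pN p (rk S u) else pN p (rk S w), (v : ℕ))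
  have fn : ∀ x, π x = none → f x = toLex (pN p (rk S x), 0) := by
    intro x hx; simp only [f, hx]
  have fs : ∀ x v, π x = some v →
      f x = toLex (if v ≤ vu then pN p (rk S u) else pN p (rk S w), (v : ℕ)) := by
    intro x v hx; simp only [f, hx]
  have huS : u ∈ S := by simp [hSdef]
  have hwS : w ∈ S := by simp [hSdef]
  have hHS : ∀ x, x ∈ H → x ∈ S := by intro x hx; simp [hSdef, hx]
  have rb : ∀ x ∈ S, rk S x < k + 2 := by
    intro x hx
    rw [← hS]
    calc rk S x < rk S n := rk_lt S hx x.2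
      _ ≤ _ := rk_le _ _
  have rinj : ∀ x ∈ S, ∀ y ∈ S, rk S x = rk S y → x = y := by
    intro x hx y hy h
    rcases lt_trichotomy x y with h1 | h1 | h1
    · have := rk_lt S hx (y := y) h1; omega
    · exact h1
    · have := rk_lt S hy (y := x) h1; omega
  have prinj : ∀ x ∈ S, ∀ y ∈ S, pN p (rk S x) = pN p (rk S y) → x = y := by
    intro x hx y hy h
    exact rinj x hx y hy (pN_inj hp (rb x hx) (rb y hy) h)
  have ffst : ∀ x ∈ S, (ofLex (f x)).1 = pN p (rk S x) := by
    intro x hx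
    rcases hπ : π x with _ | v
    · rw [fn x hπ]; rfl
    · rw [fs x v hπ]
      have hxH : x ∉ H := by rw [← hH, hπ]; simp
      rw [hSdef] at hx
      simp only [Finset.mem_insert, hxH, or_false] at hx
      rcases hx with rfl | rfl
      · rw [hu] at hπ
        cases hπ
        simp
      · rw [hw] at hπ
        cases hπ
        simp [hv]
  have hole_ne : ∀ x y v, π x = none → π y = some v → f x ≠ f y := by
    intro x y v hx hy h
    have hxS := hHS x ((hH x).1 hx)
    have h1 := congrArg (fun z => (ofLex z).1) h
    simp only [ffst x hxS, fs y v hy] at h1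
    simp only [ofLex_toLex] at h1
    split_ifs at h1
    · have := prinj _ hxS _ huS h1
      subst this
      simp [hx] at hu
    · have := prinj _ hxS _ hwS h1
      subst this
      simp [hx] at hw
  have finj : Function.Injective f := by
    intro x y h
    rcases hx : π x with _ | v
    · rcases hy : π y with _ | v'
      · rw [fn x hx, fn y hy] at h
        have := congrArg (fun z => (ofLex z).1) h
        exact prinj _ (hHS x ((hH x).1 hx)) _ (hHS y ((hH y).1 hy)) this
      · exact absurd h (hole_ne _ _ _ hx hy)
    · rcases hy : π y with _ | v'
      · exact absurd h.symm (hole_ne _ _ _ hy hx)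
      · rw [fs x v hx, fs y v' hy] at h
        have := congrArg (fun z => (ofLex z).2) h
        have h2 : v = v' := Fin.ext this
        subst h2
        exact hinj _ _ _ hx hy
  obtain ⟨σ, hσ⟩ := exists_rank f finj
  refine hav σ ?_ ⟨g, g.strictMono, ?_⟩
  · intro i j vi vj hi hj
    rw [hσ, fs i vi hi, fs j vj hj, Prod.Lex.toLex_lt_toLex]
    simp only [Fin.lt_def, Fin.le_def]
    split_ifs <;> omega
  · intro a b
    rw [hσ]
    have key : ∀ a, (ofLex (f (g a))).1 = (p a : ℕ) := by
      intro a
      rw [ffst _ (Finset.orderEmbOfFin_mem _ _ _)]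
      rw [rk_orderEmb, pN_val]
    rw [Prod.Lex.lt_iff, key, key, Fin.lt_def]
    constructor
    · rintro (h | ⟨h, h'⟩)
      · exact h
      · have := hp (Fin.ext h)
        subst this
        exact absurd h' (lt_irrefl _)
    · exact Or.inl

lemma necessity {n k m : ℕ} {p : Fin (k + 2) → Fin (k + 2)} (hp : Function.Injective p)
    {H : Finset (Fin n)} (hk : H.card = k) {π : Fin n → Option (Fin m)}
    (hH : ∀ i, π i = none ↔ i ∈ H)
    (hinj : ∀ x y v, π x = some v → π y = some v → x = y)
    (hav : PPAvoids π p)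
    {i j : Fin n} {vi vj : Fin m} (hij : i < j) (hi : π i = some vi) (hj : π j = some vj) :
    vi < vj ↔ pN p (rk H j + 1) < pN p (rk H i) := by
  have hiH : i ∉ H := by rw [← hH, hi]; simp
  have hjH : j ∉ H := by rw [← hH, hj]; simp
  have hne : i ≠ j := hij.ne
  have hvne : vi ≠ vj := by
    rintro rfl
    exact hne (hinj _ _ _ hi hj)
  have hS : (insert i (insert j H)).card = k + 2 := by
    rw [Finset.card_insert_of_notMem (by simp [hne, hiH]), Finset.card_insert_of_notMem hjH, hk]
  have hri : rk (insert i (insert j H)) i = rk H i := by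
    unfold rk
    congr 1
    rw [Finset.filter_insert, Finset.filter_insert, if_neg (by simp),
      if_neg (by simpa using hij.le)]
  have hrj : rk (insert i (insert j H)) j = rk H j + 1 := by
    unfold rk
    rw [Finset.filter_insert, Finset.filter_insert, if_pos (by simpa using hij),
      if_neg (by simp), Finset.card_insert_of_notMem (by simp [hiH])]
  have hpne : pN p (rk H j + 1) ≠ pN p (rk H i) := by
    intro h
    have h1 := rk_le H i
    have h2 := rk_le H j
    have h3 := rk_mono H (x := i) (y := j) hij.le
    have := pN_inj hp (by omega) (by omega) h
    omega
  constructor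
  · intro hv
    by_contra hc
    refine core_contains hp hH hinj hi hj hv rfl hS ?_ hav
    rw [hri, hrj]
    omega
  · intro hP
    by_contra hc
    have hv : vj < vi := lt_of_le_of_ne (not_lt.1 hc) hvne.symm
    refine core_contains hp hH hinj hj hi hv (Finset.insert_comm _ _ _) hS ?_ hav
    rw [hri, hrj]
    exact hP

lemma sufficiency {n k m : ℕ} {p : Fin (k + 2) → Fin (k + 2)} (hp : Function.Injective p)
    {H : Finset (Fin n)} (hk : H.card = k) {π : Fin n → Option (Fin m)}
    (hH : ∀ i, π i = none ↔ i ∈ H)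
    (hT : ∀ i j vi vj, i < j → π i = some vi → π j = some vj →
      (vi < vj ↔ pN p (rk H j + 1) < pN p (rk H i))) : PPAvoids π p := by
  rintro σ hσ ⟨g, hg, hgp⟩
  let G : ℕ → ℕ := fun a => if h : a < k + 2 then (g ⟨a, h⟩ : ℕ) else n
  have hG : ∀ a (h : a < k + 2), G a = g ⟨a, h⟩ := by intro a h; simp [G, h]
  have hGm : ∀ a, a < k + 2 → G a < G (a + 1) := by
    intro a h
    rw [hG a h]
    by_cases h' : a + 1 < k + 2
    · rw [hG _ h']
      exact hg (by simp [Fin.lt_def])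
    · simp only [G, h', dif_neg, not_false_eq_true]
      exact (g ⟨a, h⟩).2
  have key : ∀ t ≤ 1, ∃ (a : ℕ) (h : a < k + 2), a = rk H (g ⟨a, h⟩) + t ∧ g ⟨a, h⟩ ∉ H ∧
      ∀ b (hb : b < k + 2), a < b → rk H (g ⟨b, hb⟩) + t < b := by
    intro t ht
    let Q : ℕ → Prop := fun a => a ≤ rk H (G a) + t
    classical
    have h0 : Q 0 := by simp [Q]
    have hQ := Nat.findGreatest_spec (P := Q) (Nat.zero_le (k + 1)) h0
    have hle := Nat.findGreatest_le (P := Q) (k + 1)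
    have hmax : ∀ b, Nat.findGreatest Q (k + 1) < b → b ≤ k + 1 → ¬ Q b :=
      fun b h1 h2 => Nat.findGreatest_is_greatest h1 h2
    generalize Nat.findGreatest Q (k + 1) = a at hQ hle hmax
    have ha : a < k + 2 := by omega
    have hsucc : ¬ Q (a + 1) := by
      by_cases h : a + 1 ≤ k + 1
      · exact hmax _ (by omega) h
      · intro hq
        simp only [Q] at hq
        have := rk_le H (G (a + 1))
        omega
    simp only [Q] at hQ hsucc
    have hmono := rk_mono H (hGm a ha).le
    refine ⟨a, ha, ?_, ?_, ?_⟩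
    · rw [← hG a ha]; omega
    · intro hmem
      have := rk_lt H hmem (y := G (a + 1)) (by rw [← hG a ha]; exact hGm a ha)
      rw [← hG a ha] at this
      omega
    · intro b hb hab
      have := hmax b hab (by omega)
      simp only [Q] at this
      rw [← hG b hb]
      omega
  obtain ⟨a, ha, ha1, ha2, ha3⟩ := key 0 (by omega)
  obtain ⟨b, hb, hb1, hb2, hb3⟩ := key 1 (by omega)
  have hab : a < b := by
    rcases lt_trichotomy a b with h | h | h
    · exact h
    · subst h; omega
    · have := hb3 a ha h; omega
  have hlt : g ⟨a, ha⟩ < g ⟨b, hb⟩ := hg (by simpa [Fin.lt_def] using hab)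
  rcases hva : π (g ⟨a, ha⟩) with _ | va
  · exact ha2 ((hH _).1 hva)
  rcases hvb : π (g ⟨b, hb⟩) with _ | vb
  · exact hb2 ((hH _).1 hvb)
  have h1 := hT _ _ _ _ hlt hva hvb
  rw [← hb1, show rk H (g ⟨a, ha⟩) = a by omega] at h1
  have h2 := hσ _ _ _ _ hva hvb
  have h3 := hgp ⟨a, ha⟩ ⟨b, hb⟩
  rw [← h2, h3] at h1
  have e1 := pN_val p ⟨a, ha⟩
  have e2 := pN_val p ⟨b, hb⟩
  simp only at e1 e2
  rw [e1, e2, ← Fin.lt_def] at h1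
  have hne : p ⟨a, ha⟩ ≠ p ⟨b, hb⟩ := by
    intro h
    have := hp h
    simp at this
    omega
  rcases lt_or_gt_of_ne hne with h | h
  · exact absurd (h1.1 h) (lt_asymm h)
  · exact absurd (h1.2 h) (lt_asymm h)

lemma val_eq_card {n m : ℕ} {π : Fin n → Option (Fin m)}
    (hex : ∀ v : Fin m, ∃! i : Fin n, π i = some v) (v : Fin m) :
    (v : ℕ) = (Finset.univ.filter fun y => ∃ w, π y = some w ∧ w < v).card := by
  choose pos hpos huniq using fun v => (hex v)
  have hinj : Function.Injective pos := by
    intro a b h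
    have h1 := hpos a
    have h2 := hpos b
    simp only at h1 h2
    rw [h, h2] at h1
    exact (Option.some.inj h1).symm
  have : (Finset.univ.filter fun y => ∃ w, π y = some w ∧ w < v) =
      (Finset.Iio v).map ⟨pos, hinj⟩ := by
    ext y
    simp only [Finset.mem_filter, Finset.mem_univ, true_and, Finset.mem_map, Finset.mem_Iio,
      Function.Embedding.coeFn_mk]
    constructor
    · rintro ⟨w, h1, h2⟩
      exact ⟨w, h2, (huniq w y h1).symm⟩
    · rintro ⟨w, h1, rfl⟩
      exact ⟨w, hpos w, h1⟩
  rw [this, Finset.card_map, Fin.card_Iio]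

lemma pp_inj {n m : ℕ} {π : Fin n → Option (Fin m)}
    (hex : ∀ v : Fin m, ∃! i : Fin n, π i = some v) :
    ∀ x y v, π x = some v → π y = some v → x = y :=
  fun _ _ v hx hy => (hex v).unique hx hy

lemma uniqueness {n k m : ℕ} {p : Fin (k + 2) → Fin (k + 2)} (hp : Function.Injective p)
    {H : Finset (Fin n)} (hk : H.card = k) {π π' : Fin n → Option (Fin m)}
    (hH : ∀ i, π i = none ↔ i ∈ H) (hex : ∀ v : Fin m, ∃! i : Fin n, π i = some v)
    (hav : PPAvoids π p)
    (hH' : ∀ i, π' i = none ↔ i ∈ H) (hex' : ∀ v : Fin m, ∃! i : Fin n, π' i = some v)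
    (hav' : PPAvoids π' p) : π = π' := by
  have cmp : ∀ x y vx vy vx' vy', π x = some vx → π y = some vy → π' x = some vx' →
      π' y = some vy' → (vx < vy ↔ vx' < vy') := by
    intro x y vx vy vx' vy' h1 h2 h3 h4
    rcases lt_trichotomy x y with h | h | h
    · rw [necessity hp hk hH (pp_inj hex) hav h h1 h2,
        necessity hp hk hH' (pp_inj hex') hav' h h3 h4]
    · subst h
      rw [h1] at h2
      rw [h3] at h4
      cases h2
      cases h4
      simp
    · have e1 := necessity hp hk hH (pp_inj hex) hav h h2 h1
      have e2 := necessity hp hk hH' (pp_inj hex') hav' h h4 h3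
      have n1 : vx ≠ vy := by
        rintro rfl
        exact h.ne' (pp_inj hex _ _ _ h1 h2)
      have n2 : vx' ≠ vy' := by
        rintro rfl
        exact h.ne' (pp_inj hex' _ _ _ h3 h4)
      have e3 : vy < vx ↔ vy' < vx' := by rw [e1, e2]
      simp only [Fin.lt_def, ne_eq, Fin.ext_iff] at *
      omega
  funext x
  rcases hx : π x with _ | v
  · exact ((hH' x).2 ((hH x).1 hx)).symm
  rcases hx' : π' x with _ | v'
  · rw [(hH x).2 ((hH' x).1 hx')] at hx
    exact hx.symm
  congr 1
  apply Fin.ext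
  rw [val_eq_card hex v, val_eq_card hex' v']
  congr 1
  ext y
  simp only [Finset.mem_filter, Finset.mem_univ, true_and]
  constructor
  · rintro ⟨w, h1, h2⟩
    rcases hy' : π' y with _ | w'
    · rw [(hH y).2 ((hH' y).1 hy')] at h1
      cases h1
    · exact ⟨w', rfl, (cmp _ _ _ _ _ _ h1 hx hy' hx').1 h2⟩
  · rintro ⟨w, h1, h2⟩
    rcases hy' : π y with _ | w'
    · rw [(hH' y).2 ((hH y).1 hy')] at h1
      cases h1
    · exact ⟨w', rfl, (cmp _ _ _ _ _ _ hy' hx h1 hx').2 h2⟩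

lemma baxter_pN {k : ℕ} {p : Fin (k + 2) → Fin (k + 2)} (hB : IsBaxter p) {a b d : ℕ}
    (hab : a < b) (hbd : b + 1 < d) (hd : d < k + 2) :
    ¬ (pN p (b + 1) < pN p a ∧ pN p a < pN p d ∧ pN p d < pN p b) ∧
    ¬ (pN p b < pN p d ∧ pN p d < pN p a ∧ pN p a < pN p (b + 1)) := by
  have e1 := pN_val p ⟨a, by omega⟩
  have e2 := pN_val p ⟨b, by omega⟩
  have e3 := pN_val p ⟨b + 1, by omega⟩
  have e4 := pN_val p ⟨d, hd⟩
  simp only at e1 e2 e3 e4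
  rw [e1, e2, e3, e4]
  constructor
  · intro h
    exact hB ⟨⟨a, by omega⟩, ⟨b, by omega⟩, ⟨b + 1, by omega⟩, ⟨d, hd⟩, by simpa using hab, rfl,
      by simpa [Fin.lt_def] using hbd, Or.inl h⟩
  · intro h
    exact hB ⟨⟨a, by omega⟩, ⟨b, by omega⟩, ⟨b + 1, by omega⟩, ⟨d, hd⟩, by simpa using hab, rfl,
      by simpa [Fin.lt_def] using hbd, Or.inr h⟩

lemma existence {n k : ℕ} {p : Fin (k + 2) → Fin (k + 2)} (hp : Function.Injective p)
    (hB : IsBaxter p) {H : Finset (Fin n)} (hk : H.card = k) :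
    ∃ π : Fin n → Option (Fin (n - k)), (∀ i, π i = none ↔ i ∈ H) ∧
      (∀ v : Fin (n - k), ∃! i : Fin n, π i = some v) ∧ PPAvoids π p := by
  classical
  let R : Fin n → Fin n → Prop := fun i j =>
    (i < j ∧ pN p (rk H j + 1) < pN p (rk H i)) ∨ (j < i ∧ pN p (rk H j) < pN p (rk H i + 1))
  have hne : ∀ i j : Fin n, i < j → pN p (rk H j + 1) ≠ pN p (rk H i) := by
    intro i j hij h
    have h1 := rk_le H i
    have h2 := rk_le H j
    have h3 := rk_mono H (x := i) (y := j) (Fin.le_def.1 hij.le)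
    have := pN_inj hp (by omega) (by omega) h
    omega
  have hirr : ∀ x, ¬ R x x := by intro x; simp [R]
  have htot : ∀ x y, x ≠ y → R x y ∨ R y x := by
    intro x y hxy
    rcases lt_or_gt_of_ne hxy with h | h
    · have := hne _ _ h
      rcases lt_or_gt_of_ne this with h' | h'
      · exact Or.inl (Or.inl ⟨h, h'⟩)
      · exact Or.inr (Or.inr ⟨h, h'⟩)
    · have := hne _ _ h
      rcases lt_or_gt_of_ne this with h' | h'
      · exact Or.inr (Or.inl ⟨h, h'⟩)
      · exact Or.inl (Or.inr ⟨h, h'⟩)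
  have hasymm : ∀ x y, R x y → ¬ R y x := by
    rintro x y (⟨h1, h2⟩ | ⟨h1, h2⟩) (⟨h3, h4⟩ | ⟨h3, h4⟩) <;> omega
  -- no cycles on increasing triples
  have hcyc : ∀ x y z : Fin n, x < y → y < z →
      ¬ (R x y ∧ R y z ∧ R z x) ∧ ¬ (R y x ∧ R z y ∧ R x z) := by
    intro x y z hxy hyz
    have hxz := hxy.trans hyz
    have m1 := rk_mono H (x := x) (y := y) (Fin.le_def.1 hxy.le)
    have m2 := rk_mono H (x := y) (y := z) (Fin.le_def.1 hyz.le)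
    have hz := rk_le H z
    have key : ∀ A B C : ℕ, A ≤ B → B ≤ C → C ≤ k →
        ¬ (pN p (B + 1) < pN p A ∧ pN p (C + 1) < pN p B ∧ pN p A < pN p (C + 1)) ∧
        ¬ (pN p A < pN p (B + 1) ∧ pN p B < pN p (C + 1) ∧ pN p (C + 1) < pN p A) := by
      intro A B C hAB hBC hC
      rcases hAB.eq_or_lt with rfl | hAB
      · constructor <;> rintro ⟨h1, h2, h3⟩ <;> omega
      rcases hBC.eq_or_lt with rfl | hBC
      · constructor <;> rintro ⟨h1, h2, h3⟩ <;> omega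
      have := baxter_pN hB hAB (d := C + 1) (by omega) (by omega)
      constructor <;> rintro ⟨h1, h2, h3⟩
      · exact this.1 ⟨h1, h3, h2⟩
      · exact this.2 ⟨h2, h3, h1⟩
    have K := key _ _ _ m1 m2 (by omega)
    simp only [R, hxy, hyz, hxz, hxy.not_gt, hyz.not_gt, hxz.not_gt, true_and, false_and, or_false,
      false_or]
    exact K
  have htrans : ∀ x y z, R x y → R y z → R x z := by
    intro x y z h1 h2
    by_contra h3
    have hxz : x ≠ z := by
      rintro rfl
      exact hasymm _ _ h1 h2
    have h3 : R z x := (htot x z hxz).resolve_left h3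
    have hxy : x ≠ y := by rintro rfl; exact hirr _ h1
    have hyz : y ≠ z := by rintro rfl; exact hirr _ h2
    rcases lt_or_gt_of_ne hxy with a | a <;> rcases lt_or_gt_of_ne hyz with b | b <;>
      rcases lt_or_gt_of_ne hxz with c | c
    · exact (hcyc _ _ _ a b).1 ⟨h1, h2, h3⟩
    · exact absurd (a.trans b) (lt_asymm c)
    · exact (hcyc _ _ _ c b).2 ⟨h3, h2, h1⟩
    · exact (hcyc _ _ _ c a).1 ⟨h3, h1, h2⟩
    · exact (hcyc _ _ _ a c).2 ⟨h1, h3, h2⟩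
    · exact (hcyc _ _ _ b c).1 ⟨h2, h3, h1⟩
    · exact absurd (b.trans a) (lt_asymm c)
    · exact (hcyc _ _ _ b a).2 ⟨h2, h1, h3⟩
  let r : Fin n → ℕ := fun x => (Hᶜ.filter fun y => R y x).card
  have hrlt : ∀ x y, x ∉ H → R x y → r x < r y := by
    intro x y hx h
    apply Finset.card_lt_card
    rw [Finset.ssubset_iff_of_subset]
    · exact ⟨x, by simp [hx, h], by simp [hirr]⟩
    · intro z hz
      simp only [Finset.mem_filter] at hz ⊢
      exact ⟨hz.1, htrans _ _ _ hz.2 h⟩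
  have hcard : (Hᶜ).card = n - k := by rw [Finset.card_compl, Fintype.card_fin, hk]
  have hrb : ∀ x, x ∉ H → r x < n - k := by
    intro x hx
    rw [← hcard]
    apply Finset.card_lt_card
    rw [Finset.ssubset_iff_of_subset (Finset.filter_subset _ _)]
    exact ⟨x, by simp [hx], by simp [hirr]⟩
  let F : {x // x ∉ H} → Fin (n - k) := fun x => ⟨r x, hrb x x.2⟩
  have hFinj : Function.Injective F := by
    intro x y h
    have h : r x = r y := congrArg Fin.val h
    by_contra hxy
    rcases htot x y (fun h => hxy (Subtype.ext h)) with h' | h'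
    · have := hrlt _ _ x.2 h'; omega
    · have := hrlt _ _ y.2 h'; omega
  have hFbij : Function.Bijective F := by
    rw [Fintype.bijective_iff_injective_and_card]
    refine ⟨hFinj, ?_⟩
    rw [Fintype.card_fin, ← hcard, Fintype.card_subtype]
    congr 1
    ext x
    simp
  let π : Fin n → Option (Fin (n - k)) := fun x => if h : x ∈ H then none else some (F ⟨x, h⟩)
  have hπ : ∀ x v, π x = some v ↔ ∃ h : x ∉ H, F ⟨x, h⟩ = v := by
    intro x v
    by_cases h : x ∈ H <;> simp [π, h]
  have hπn : ∀ i, π i = none ↔ i ∈ H := by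
    intro i
    by_cases h : i ∈ H <;> simp [π, h]
  refine ⟨π, hπn, ?_, ?_⟩
  · intro v
    obtain ⟨x, hx⟩ := hFbij.2 v
    refine ⟨x, (hπ _ _).2 ⟨x.2, hx⟩, ?_⟩
    intro y hy
    obtain ⟨h, hy⟩ := (hπ _ _).1 hy
    exact congrArg Subtype.val (hFinj (hy.trans hx.symm))
  · apply sufficiency hp hk hπn
    intro i j vi vj hij hi hj
    obtain ⟨hi', rfl⟩ := (hπ _ _).1 hi
    obtain ⟨hj', rfl⟩ := (hπ _ _).1 hj
    have e : R i j ↔ pN p (rk H j + 1) < pN p (rk H i) := by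
      simp [R, hij, hij.not_gt]
    rw [← e]
    change r i < r j ↔ _
    constructor
    · intro h
      rcases htot i j hij.ne with h' | h'
      · exact h'
      · have := hrlt _ _ hj' h'; omega
    · exact hrlt _ _ hi'

lemma nonexistence {n k : ℕ} {p : Fin (k + 2) → Fin (k + 2)} (hp : Function.Injective p)
    (hB : ¬ IsBaxter p) (hn : k + 3 ≤ n) :
    ∃ H : Finset (Fin n), H.card = k ∧
    ¬ ∃ π : Fin n → Option (Fin (n - k)), (∀ i, π i = none ↔ i ∈ H) ∧
      (∀ v : Fin (n - k), ∃! i : Fin n, π i = some v) ∧ PPAvoids π p := by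
  unfold IsBaxter at hB
  rw [not_not] at hB
  obtain ⟨a, b, c, d, hab, hbc, hcd, hpat⟩ := hB
  rw [Fin.lt_def] at hab hcd
  have hd := d.2
  let H : Finset (Fin n) := Finset.univ.filter fun y =>
    (y : ℕ) < k + 3 ∧ (y : ℕ) ≠ a ∧ (y : ℕ) ≠ b + 1 ∧ (y : ℕ) ≠ d + 1
  have hrk : ∀ x ≤ k + 3, rk H x =
      ((((Finset.range x).erase a).erase (b + 1)).erase (d + 1)).card := by
    intro x hx
    unfold rk
    rw [← Finset.card_map Fin.valEmbedding]
    congr 1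
    ext y
    simp only [H, Finset.mem_map, Finset.mem_filter, Finset.mem_univ, true_and, Finset.mem_erase,
      Finset.mem_range, Fin.valEmbedding_apply]
    constructor
    · rintro ⟨z, hz, rfl⟩
      omega
    · intro h
      exact ⟨⟨y, by omega⟩, by simp only; omega, rfl⟩
  have hcard : H.card = k := by
    have h1 : rk H (k + 3) = H.card := by
      unfold rk
      congr 1
      rw [Finset.filter_eq_self]
      intro x hx
      simp only [H, Finset.mem_filter] at hx
      exact hx.2.1
    rw [← h1, hrk _ le_rfl]
    rw [Finset.card_erase_of_mem, Finset.card_erase_of_mem, Finset.card_erase_of_mem,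
      Finset.card_range]
    · omega
    all_goals simp only [Finset.mem_erase, Finset.mem_range]; omega
  have ra : rk H a = a := by
    rw [hrk _ (by omega), Finset.erase_eq_of_notMem, Finset.erase_eq_of_notMem,
      Finset.erase_eq_of_notMem, Finset.card_range]
    all_goals simp only [Finset.mem_erase, Finset.mem_range]; omega
  have rb : rk H (b + 1 : ℕ) = b := by
    rw [hrk _ (by omega), Finset.erase_eq_of_notMem, Finset.erase_eq_of_notMem,
      Finset.card_erase_of_mem, Finset.card_range]
    · omega
    all_goals simp only [Finset.mem_erase, Finset.mem_range]; omega
  have rd : rk H (d + 1 : ℕ) + 1 = d := by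
    rw [hrk _ (by omega), Finset.erase_eq_of_notMem, Finset.card_erase_of_mem,
      Finset.card_erase_of_mem, Finset.card_range]
    · omega
    all_goals simp only [Finset.mem_erase, Finset.mem_range]; omega
  refine ⟨H, hcard, ?_⟩
  rintro ⟨π, hH, hex, hav⟩
  have hval : ∀ x : Fin n, x ∉ H → ∃ v, π x = some v := by
    intro x hx
    rcases h : π x with _ | v
    · exact absurd ((hH x).1 h) hx
    · exact ⟨v, rfl⟩
  obtain ⟨vi, hi⟩ := hval ⟨a, by omega⟩ (by simp [H])
  obtain ⟨vj, hj⟩ := hval ⟨b + 1, by omega⟩ (by simp [H])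
  obtain ⟨vl, hl⟩ := hval ⟨d + 1, by omega⟩ (by simp [H])
  have e1 := necessity hp hcard hH (pp_inj hex) hav (Fin.lt_def.2 (by simp only; omega)) hi hj
  have e2 := necessity hp hcard hH (pp_inj hex) hav (Fin.lt_def.2 (by simp only; omega)) hj hl
  have e3 := necessity hp hcard hH (pp_inj hex) hav (Fin.lt_def.2 (by simp only; omega)) hi hl
  simp only at e1 e2 e3
  rw [ra, rb, hbc, pN_val, pN_val] at e1
  rw [rb, rd, pN_val, pN_val] at e2
  rw [ra, rd, pN_val, pN_val] at e3
  simp only [Fin.lt_def] at *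
  omega

/-- If `p` of length `k+2` is Baxter then `s_n^k(p) = C(n,k)` for `n ≥ k`;
if not, `s_n^k(p) < C(n,k)` for `n ≥ k+3`. Moreover, all Baxter permutations
of length `k+2` are strongly `k`-Wilf equivalent. -/
theorem baxter_count (k : ℕ) (p : Fin (k + 2) → Fin (k + 2))
    (hp : Function.Bijective p) :
    (IsBaxter p → ∀ n : ℕ, k ≤ n → snk n k p = n.choose k) ∧
    (¬ IsBaxter p → ∀ n : ℕ, k + 3 ≤ n → snk n k p < n.choose k) ∧
    (∀ q : Fin (k + 2) → Fin (k + 2), Function.Bijective q →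
      IsBaxter p → IsBaxter q →
      ∀ (n : ℕ) (H : Finset (Fin n)), H.card = k → snH H p = snH H q) := by
  have hpi := hp.1
  classical
  have hmem : ∀ (n : ℕ) (π : {π : Fin n → Option (Fin (n - k)) // IsPPerm k π ∧ PPAvoids π p}),
      (Finset.univ.filter fun i => π.1 i = none) ∈ Finset.powersetCard k Finset.univ := by
    intro n π
    rw [Finset.mem_powersetCard]
    exact ⟨Finset.subset_univ _, π.2.1.1⟩
  let Φ : ∀ n : ℕ, {π : Fin n → Option (Fin (n - k)) // IsPPerm k π ∧ PPAvoids π p} →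
      {H : Finset (Fin n) // H ∈ Finset.powersetCard k (Finset.univ : Finset (Fin n))} :=
    fun n π => ⟨_, hmem n π⟩
  have hcard : ∀ n : ℕ, Nat.card {H : Finset (Fin n) //
      H ∈ Finset.powersetCard k (Finset.univ : Finset (Fin n))} = n.choose k := by
    intro n
    rw [Nat.card_eq_fintype_card, Fintype.card_coe, Finset.card_powersetCard, Finset.card_univ,
      Fintype.card_fin]
  have hΦ : ∀ n, Function.Injective (Φ n) := by
    intro n π π' h
    have h1 : (Finset.univ.filter fun i => π.1 i = none) =
        (Finset.univ.filter fun i => π'.1 i = none) := congrArg Subtype.val h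
    apply Subtype.ext
    refine uniqueness hpi π.2.1.1 (fun i => by simp) π.2.1.2 π.2.2 (fun i => ?_) π'.2.1.2 π'.2.2
    rw [h1]
    simp
  refine ⟨?_, ?_, ?_⟩
  · intro hB n _
    rw [← hcard n]
    refine Nat.card_eq_of_bijective (Φ n) ⟨hΦ n, ?_⟩
    rintro ⟨H, hH⟩
    obtain ⟨π, h1, h2, h3⟩ := existence hpi hB (Finset.mem_powersetCard.1 hH).2
    have he : (Finset.univ.filter fun i => π i = none) = H := by
      ext i
      simp [h1]
    refine ⟨⟨π, ⟨?_, h2⟩, h3⟩, Subtype.ext he⟩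
    rw [he]
    exact (Finset.mem_powersetCard.1 hH).2
  · intro hB n hn
    obtain ⟨H, hHk, hno⟩ := nonexistence hpi hB hn
    rw [← hcard n]
    unfold snk
    refine lt_of_le_of_ne (Nat.card_le_card_of_injective _ (hΦ n)) ?_
    intro heq
    have hbij : Function.Bijective (Φ n) :=
      (Nat.bijective_iff_injective_and_card _).2 ⟨hΦ n, heq⟩
    obtain ⟨π, hπ⟩ := hbij.2 ⟨H, Finset.mem_powersetCard.2 ⟨Finset.subset_univ _, hHk⟩⟩
    have he : (Finset.univ.filter fun i => π.1 i = none) = H := congrArg Subtype.val hπ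
    exact hno ⟨π.1, fun i => by rw [← he]; simp, π.2.1.2, π.2.2⟩
  · intro q hq hBp hBq n H hk
    have one : ∀ q : Fin (k + 2) → Fin (k + 2), Function.Injective q → IsBaxter q →
        snH H q = 1 := by
      subst hk
      intro q hq hB
      unfold snH
      rw [Nat.card_eq_one_iff_unique]
      constructor
      · constructor
        intro π π'
        exact Subtype.ext (uniqueness hq rfl π.2.1.1 π.2.1.2 π.2.2 π'.2.1.1 π'.2.1.2 π'.2.2)
      · obtain ⟨π, h1, h2, h3⟩ := existence hq hB (H := H) rfl
        exact ⟨⟨π, ⟨h1, h2⟩, h3⟩⟩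
    rw [one p hpi hBp, one q hq.1 hBq]
end

section
/- For n ≥ 1, the number of partial permutations of length n with one hole avoiding the pattern 1342 equals binomial(2n−2, n−1) − binomial(2n−2, n−5). -/
open Finset

namespace PP

/-- Coefficients of powers of the Catalan generating function. -/
def cp : ℕ → ℕ → ℕ
  | 0, _ => 1
  | _ + 1, 0 => 0
  | m + 1, r + 1 => cp (m + 1) r + cp m (r + 2)

/-- Shifted version of `cp`. -/
def cq : ℕ → ℕ → ℕ
  | 0, _ => 0
  | m + 1, r => cp m r

theorem cp_sum (m r : ℕ) : cp (m + 1) r = ∑ i ∈ Finset.range r, cp m (i + 2) := by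
  induction r with
  | zero => simp [cp]
  | succ r ih => rw [Finset.sum_range_succ, ← ih, cp]

theorem cq_sum (m r : ℕ) : cq (m + 1) (r + 2) =
    cq (m + 1) 2 + ∑ i ∈ Finset.range r, cq m (i + 4) := by
  induction r with
  | zero => simp
  | succ r ih =>
    rw [Finset.sum_range_succ, ← add_assoc, ← ih]
    cases m with
    | zero => simp [cq, cp]
    | succ m => simp [cq, cp]

/-- States of the generating tree. -/
inductive St where
  | low (s : ℕ) : St
  | mid (k s : ℕ) : St
  | high (k : ℕ) : St

open St

/-- Transition operator of the generating tree. -/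
def T (F : St → ℕ) : St → ℕ
  | low s => (∑ i ∈ Finset.range s, F (low (i + 2))) + F (mid 2 s)
  | mid k s => (∑ i ∈ Finset.range k, F (mid (i + 2) s)) + s * F (high 1)
  | high k => (∑ i ∈ Finset.range k, F (high (i + 2))) + F (high 1)

/-- Number of descendants. -/
def V : ℕ → St → ℕ
  | 0 => fun _ => 1
  | m + 1 => T (V m)

theorem V_high (m k : ℕ) : V m (high k) = cp m (k + 1) := by
  induction m generalizing k with
  | zero => simp [V, cp]
  | succ m ih =>
    rw [cp_sum, Finset.sum_range_succ']
    simp [V, T, ih]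

theorem V_mid (m k s : ℕ) : V m (mid k s) = cp m k + s * cq m (k + 2) := by
  induction m generalizing k with
  | zero => simp [V, cp, cq]
  | succ m ih =>
    simp only [V, T, ih, V_high]
    rw [cp_sum, cq_sum, Finset.sum_add_distrib, ← Finset.mul_sum]
    simp only [cq]
    ring

theorem V_low (m s : ℕ) : V m (low s) + cq m 4 = cp m (s + 1) + cq m (s + 4) := by
  induction m generalizing s with
  | zero => simp [V, cp, cq]
  | succ m ih =>
    simp only [V, T, V_mid]
    have h : ∑ i ∈ Finset.range s, (V m (low (i + 2)) + cq m 4) =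
        ∑ i ∈ Finset.range s, (cp m (i + 3) + cq m (i + 6)) :=
      Finset.sum_congr rfl fun i _ => ih (i + 2)
    rw [Finset.sum_add_distrib, Finset.sum_add_distrib] at h
    simp only [Finset.sum_const, Finset.card_range, smul_eq_mul] at h
    have h1 : cp (m + 1) (s + 1) = (∑ i ∈ Finset.range s, cp m (i + 3)) + cp m 2 := by
      rw [cp_sum, Finset.sum_range_succ']
    have h2 := cq_sum m (s + 2)
    rw [Finset.sum_range_succ', Finset.sum_range_succ'] at h2
    have h3 := cq_sum m 2
    simp [Finset.sum_range_succ] at h3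
    simp only [add_assoc] at h2
    norm_num at h2 h
    linarith

/-- binomial with index lowered by `d`, zero when negative. -/
def bz (a m d : ℕ) : ℕ := if d ≤ m then a.choose (m - d) else 0

theorem bz_pascal (a m d : ℕ) : bz (a + 1) m d = bz a m d + bz a m (d + 1) := by
  unfold bz
  rcases lt_trichotomy m d with h | h | h
  · simp [show ¬ d ≤ m by omega, show ¬ d + 1 ≤ m by omega]
  · subst h; simp
  · obtain ⟨e, rfl⟩ : ∃ e, m = d + 1 + e := ⟨m - d - 1, by omega⟩
    simp only [show d ≤ d + 1 + e by omega, show d + 1 ≤ d + 1 + e by omega, if_true]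
    rw [show d + 1 + e - d = e + 1 by omega, show d + 1 + e - (d + 1) = e by omega,
      Nat.choose_succ_succ]; ring

theorem bz_succ (a m d : ℕ) : bz a (m + 1) (d + 1) = bz a m d := by
  simp [bz]

theorem cp_closed (m r : ℕ) : cp m (r + 1) + bz (2 * m + r) m 1 = bz (2 * m + r) m 0 := by
  induction m generalizing r with
  | zero => simp [cp, bz]
  | succ m ih =>
    induction r with
    | zero =>
      have := ih 1
      have e : 2 * (m + 1) + 0 = (2 * m + 1) + 1 := by ring
      rw [e, cp, cp, bz_pascal _ _ 1, bz_pascal _ _ 0, bz_succ _ _ 1, bz_succ _ _ 0]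
      have hs : bz (2 * m + 1) (m + 1) 0 = bz (2 * m + 1) m 0 := by
        simp only [bz, Nat.zero_le, if_true, Nat.sub_zero]
        exact (Nat.choose_symm_half m)
      linarith
    | succ r ihr =>
      have := ih (r + 2)
      have e : 2 * (m + 1) + (r + 1) = (2 * (m + 1) + r) + 1 := by ring
      have e' : 2 * m + (r + 2) = 2 * (m + 1) + r := by ring
      rw [e'] at this
      rw [e, cp, bz_pascal, bz_pascal, bz_succ, bz_succ]
      rw [bz_succ] at ihr
      linarith

theorem final_num (N : ℕ) : V N (low 1) + bz (2 * N) N 4 = bz (2 * N) N 0 := by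
  have h := V_low N 1
  have h1 := cp_closed N 1
  rw [bz_pascal, bz_pascal] at h1
  match N with
  | 0 => simp [V, bz]
  | 1 => simp [cq, cp, V, bz] at *; omega
  | M + 2 =>
    have h2 := cp_closed M 5
    have e : cq (M + 2) (1 + 4) = cq (M + 2) 4 + cp M 6 := by simp [cq, cp]
    rw [e] at h
    have e : 2 * M + 5 = 2 * (M + 2) + 1 := by ring
    have bb : ∀ d, bz (2 * (M + 2)) M d = bz (2 * (M + 2)) (M + 2) (d + 2) := by
      intro d; rw [bz_succ, bz_succ]
    rw [e, bz_pascal, bz_pascal, bb, bb, bb] at h2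
    norm_num at *
    linarith
end PP
namespace PP
open St
open scoped List

theorem sum_perm'Aux (t : ℕ) (w : List ℕ) (G : List ℕ → ℕ) :
    ((List.permutations'Aux t w).map G).sum =
      ∑ p ∈ Finset.range (w.length + 1), G (w.take p ++ t :: w.drop p) := by
  induction w generalizing G with
  | nil => simp [List.permutations'Aux]
  | cons y ys ih =>
    rw [List.length_cons, Finset.sum_range_succ']
    simp only [List.permutations'Aux, List.map_cons, List.sum_cons, List.map_map, ih]
    simp [add_comm]

theorem perm'Aux_append (t : ℕ) (L : List ℕ) (x : ℕ) (R : List ℕ) :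
    List.permutations'Aux t (L ++ x :: R) =
      (List.permutations'Aux t L).map (· ++ x :: R) ++
        (List.permutations'Aux t R).map (fun R' => L ++ x :: R') := by
  induction L with
  | nil => simp [List.permutations'Aux]
  | cons y ys ih => simp [List.permutations'Aux, ih, Function.comp_def]

theorem sub_ins {l L1 L2 : List ℕ} {t : ℕ} :
    l <+ L1 ++ t :: L2 ↔ l <+ L1 ++ L2 ∨ ∃ l1 l2, l = l1 ++ t :: l2 ∧ l1 <+ L1 ∧ l2 <+ L2 := by
  constructor
  · intro h
    obtain ⟨l1, l2, rfl, h1, h2⟩ := List.sublist_append_iff.1 h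
    rcases List.sublist_cons_iff.1 h2 with h3 | ⟨r, rfl, h3⟩
    · exact Or.inl (h1.append h3)
    · exact Or.inr ⟨l1, r, rfl, h1, h3⟩
  · rintro (h | ⟨l1, l2, rfl, h1, h2⟩)
    · exact h.trans ((List.Sublist.refl L1).append (List.sublist_cons_self t L2))
    · exact h1.append (h2.cons_cons t)

/-- Validity of the pair (word left of the hole, word right of the hole). -/
structure Valid (L R : List ℕ) : Prop where
  h1 : ∀ a b c, [a, b, c] <+ L → a < b → b < c → False
  h2 : ∀ a b c, [b, c, a] <+ R → a < b → b < c → False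
  h3 : ∀ a b c, a ∈ L → [c, b] <+ R → a < b → b < c → False
  h4 : ∀ a b c, [a, c] <+ L → b ∈ R → a < b → b < c → False

/-- Admissible left parts. -/
def gL (R L1 : List ℕ) : Prop :=
  (∀ a b, [a, b] <+ L1 → ¬ a < b) ∧ ∀ a ∈ L1, ∀ c ∈ R, ¬ a < c

/-- Admissible splits in the right part. -/
def gR (R1 R2 : List ℕ) : Prop := ∀ a ∈ R1, ∀ b ∈ R2, ¬ b < a

theorem valid_insL {L1 L2 R : List ℕ} {t : ℕ} (ht : ∀ x ∈ L1 ++ L2, x < t) (hR : ∀ x ∈ R, x < t) :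
    Valid (L1 ++ t :: L2) R ↔ Valid (L1 ++ L2) R ∧ gL R L1 := by
  constructor
  · intro h
    refine ⟨⟨?_, h.h2, ?_, ?_⟩, ?_, ?_⟩
    · intro a b c hs; exact h.h1 a b c (sub_ins.2 (Or.inl hs))
    · intro a b c ha; exact h.h3 a b c (by simp at ha ⊢; tauto)
    · intro a b c hs; exact h.h4 a b c (sub_ins.2 (Or.inl hs))
    · intro a b hs hab
      refine h.h1 a b t (sub_ins.2 (Or.inr ⟨[a, b], [], rfl, hs, List.nil_sublist _⟩)) hab ?_
      exact ht b (List.mem_append_left _ (hs.subset (by simp)))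
    · intro a ha c hc hac
      exact h.h4 a c t (sub_ins.2 (Or.inr ⟨[a], [], rfl, by simpa using ha, List.nil_sublist _⟩))
        hc hac (hR c hc)
  · rintro ⟨h, g1, g2⟩
    refine ⟨?_, h.h2, ?_, ?_⟩
    · intro a b c hs hab hbc
      rcases sub_ins.1 hs with hs | ⟨l1, l2, e, s1, s2⟩
      · exact h.h1 a b c hs hab hbc
      · match l1, e with
        | [], e =>
          simp at e; obtain ⟨rfl, rfl⟩ := e
          have := ht b (List.mem_append_right _ (s2.subset (by simp)))
          omega
        | [x], e =>
          simp at e; obtain ⟨rfl, rfl, rfl⟩ := e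
          have := ht c (List.mem_append_right _ (s2.subset (by simp)))
          omega
        | [x, y], e =>
          simp at e; obtain ⟨rfl, rfl, rfl, rfl⟩ := e
          exact g1 _ _ s1 hab
        | x :: y :: z :: u, e => simp at e
    · intro a b c ha hs hab hbc
      simp only [List.mem_append, List.mem_cons] at ha
      by_cases hat : a = t
      · have := hR b (hs.subset (by simp)); omega
      · exact h.h3 a b c (by simp; tauto) hs hab hbc
    · intro a b c hs hb hab hbc
      rcases sub_ins.1 hs with hs | ⟨l1, l2, e, s1, s2⟩
      · exact h.h4 a b c hs hb hab hbc
      · match l1, e with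
        | [], e =>
          simp at e; obtain ⟨rfl, rfl⟩ := e
          have := hR b hb
          omega
        | [x], e =>
          simp at e; obtain ⟨rfl, rfl, rfl⟩ := e
          exact g2 a (s1.subset (by simp)) b hb hab
        | x :: y :: z, e => simp at e

theorem valid_insR {L R1 R2 : List ℕ} {t : ℕ} (ht : ∀ x ∈ R1 ++ R2, x < t) (hL : ∀ x ∈ L, x < t) :
    Valid L (R1 ++ t :: R2) ↔ Valid L (R1 ++ R2) ∧ gR R1 R2 ∧ ∀ a ∈ L, ∀ b ∈ R2, ¬ a < b := by
  constructor
  · intro h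
    refine ⟨⟨h.h1, ?_, ?_, ?_⟩, ?_, ?_⟩
    · intro a b c hs; exact h.h2 a b c (sub_ins.2 (Or.inl hs))
    · intro a b c ha hs; exact h.h3 a b c ha (sub_ins.2 (Or.inl hs))
    · intro a b c hs hb; exact h.h4 a b c hs (by simp at hb ⊢; tauto)
    · intro b hb a ha hab
      exact h.h2 a b t (sub_ins.2 (Or.inr ⟨[b], [a], rfl, by simpa using hb, by simpa using ha⟩))
        hab (ht b (by simp [hb]))
    · intro a ha b hb hab
      exact h.h3 a b t ha (sub_ins.2 (Or.inr ⟨[], [b], rfl, List.nil_sublist _, by simpa using hb⟩))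
        hab (ht b (by simp [hb]))
  · rintro ⟨h, g1, g2⟩
    refine ⟨h.h1, ?_, ?_, ?_⟩
    · intro a b c hs hab hbc
      rcases sub_ins.1 hs with hs | ⟨l1, l2, e, s1, s2⟩
      · exact h.h2 a b c hs hab hbc
      · match l1, e with
        | [], e =>
          simp at e; obtain ⟨rfl, rfl⟩ := e
          have := ht c (List.mem_append_right _ (s2.subset (by simp)))
          omega
        | [x], e =>
          simp at e; obtain ⟨rfl, rfl, rfl⟩ := e
          exact g1 b (s1.subset (by simp)) a (s2.subset (by simp)) hab
        | [x, y], e =>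
          simp at e; obtain ⟨rfl, rfl, rfl, rfl⟩ := e
          have := ht b (List.mem_append_left _ (s1.subset (by simp)))
          omega
        | x :: y :: z :: u, e => simp at e
    · intro a b c ha hs hab hbc
      rcases sub_ins.1 hs with hs | ⟨l1, l2, e, s1, s2⟩
      · exact h.h3 a b c ha hs hab hbc
      · match l1, e with
        | [], e =>
          simp at e; obtain ⟨rfl, rfl⟩ := e
          exact g2 a ha b (s2.subset (by simp)) hab
        | [x], e =>
          simp at e; obtain ⟨rfl, rfl, rfl⟩ := e
          have := ht c (List.mem_append_left _ (s1.subset (by simp)))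
          omega
        | x :: y :: z, e => simp at e
    · intro a b c hs hb hab hbc
      by_cases hbt : b = t
      · have := hL c (hs.subset (by simp)); omega
      · exact h.h4 a b c hs (by simp at hb ⊢; tauto) hab hbc

open Classical in
/-- number of admissible left prefixes -/
noncomputable def nL (L R : List ℕ) : ℕ :=
  #{p ∈ Finset.range (L.length + 1) | gL R (L.take p)}

open Classical in
/-- number of admissible splits of the right part -/
noncomputable def sR (R : List ℕ) : ℕ :=
  #{p ∈ Finset.range (R.length + 1) | gR (R.take p) (R.drop p)}

/-- some right letter exceeds some left letter -/
def High (L R : List ℕ) : Prop := ∃ a ∈ L, ∃ c ∈ R, a < c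

open Classical in
/-- state of a pair of words -/
noncomputable def st (L R : List ℕ) : St :=
  if L = [] then low (sR R) else if High L R then high (nL L R) else mid (nL L R) (sR R)

theorem gL_nil (R : List ℕ) : gL R [] := by simp [gL]

theorem gL_mono {R A B : List ℕ} (h : A <+ B) (hB : gL R B) : gL R A :=
  ⟨fun a b hs => hB.1 a b (hs.trans h), fun a ha => hB.2 a (h.subset ha)⟩

theorem filter_down (n : ℕ) (P : ℕ → Prop) [DecidablePred P] (hP : ∀ p q, p ≤ q → P q → P p) :
    {p ∈ Finset.range n | P p} = Finset.range #{p ∈ Finset.range n | P p} := by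
  induction n with
  | zero => simp
  | succ n ih =>
    by_cases h : P n
    · have : {p ∈ Finset.range (n+1) | P p} = Finset.range (n+1) := by
        ext p; simp only [Finset.mem_filter, Finset.mem_range, and_iff_left_iff_imp]
        intro hp; exact hP p n (by omega) h
      rw [this]; simp
    · rw [Finset.range_add_one, Finset.filter_insert, if_neg h]; exact ih

theorem nL_cons {L R : List ℕ} {t : ℕ} (ht : ∀ x ∈ L, x < t) (hR : ∀ x ∈ R, x < t) :
    nL (t :: L) R = nL L R + 1 := by
  classical
  unfold nL
  simp only [Finset.card_filter]
  rw [List.length_cons, Finset.sum_range_succ']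
  congr 1
  · refine Finset.sum_congr rfl fun p _ => ?_
    have : gL R ((t :: L).take (p + 1)) ↔ gL R (L.take p) := by
      rw [List.take_succ_cons]
      constructor
      · exact gL_mono (List.sublist_cons_self _ _)
      · rintro ⟨g1, g2⟩
        refine ⟨?_, ?_⟩
        · intro a b hs hab
          rcases List.sublist_cons_iff.1 hs with hs | ⟨r, e, hs⟩
          · exact g1 a b hs hab
          · simp at e; obtain ⟨rfl, rfl⟩ := e
            have := ht b (List.mem_of_mem_take (hs.subset (by simp) : b ∈ L.take p))
            omega
        · intro a ha c hc
          rcases List.mem_cons.1 ha with rfl | ha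
          · have := hR c hc; omega
          · exact g2 a ha c hc
    simp only [this]
  · simp [gL_nil]

theorem nL_ins {L1 L2 R : List ℕ} {t : ℕ} (h0 : L1 ≠ []) (g : gL R L1) (ht : ∀ x ∈ L1, x < t) :
    nL (L1 ++ t :: L2) R = L1.length + 1 := by
  classical
  unfold nL
  have : {p ∈ Finset.range ((L1 ++ t :: L2).length + 1) | gL R ((L1 ++ t :: L2).take p)} =
      Finset.range (L1.length + 1) := by
    ext p
    simp only [Finset.mem_filter, Finset.mem_range]
    constructor
    · rintro ⟨_, h⟩
      by_contra hp
      obtain ⟨x, hx⟩ := List.exists_mem_of_ne_nil _ h0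
      refine h.1 x t ?_ (ht x hx)
      obtain ⟨q, rfl⟩ : ∃ q, p = L1.length + (q + 1) := ⟨p - L1.length - 1, by omega⟩
      rw [List.take_length_add_append, List.take_succ_cons]
      exact (List.singleton_sublist.2 hx).append ((List.nil_sublist _).cons_cons t)
    · intro hp
      refine ⟨by simp; omega, ?_⟩
      rw [List.take_append_of_le_length (by omega)]
      exact gL_mono (List.take_sublist _ _) g
  rw [this, Finset.card_range]

theorem sum_L (L R : List ℕ) (f : ℕ → ℕ) :
    open Classical in
    (∑ p ∈ Finset.range (L.length + 1), if gL R (L.take p) then f p else 0) =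
      ∑ p ∈ Finset.range (nL L R), f p := by
  classical
  rw [← Finset.sum_filter, nL, ← filter_down]
  intro p q hpq
  exact gL_mono (List.take_sublist_take_left hpq)

theorem nL_pos (L R : List ℕ) : ∃ k, nL L R = k + 1 := by
  classical
  refine Nat.exists_eq_succ_of_ne_zero ?_
  unfold nL
  rw [Finset.card_ne_zero]
  exact ⟨0, by simp [gL_nil]⟩

open Classical in
theorem sR_ins {R1 R2 : List ℕ} {t : ℕ} (ht : ∀ x ∈ R1 ++ R2, x < t) :
    sR (R1 ++ t :: R2) = #{q ∈ {p ∈ Finset.range ((R1 ++ R2).length + 1) |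
      gR ((R1 ++ R2).take p) ((R1 ++ R2).drop p)} | q ≤ R1.length} + 1 := by
  unfold sR
  have : {p ∈ Finset.range ((R1 ++ t :: R2).length + 1) |
      gR ((R1 ++ t :: R2).take p) ((R1 ++ t :: R2).drop p)} =
      insert (R1.length + R2.length + 1) {q ∈ {p ∈ Finset.range ((R1 ++ R2).length + 1) |
      gR ((R1 ++ R2).take p) ((R1 ++ R2).drop p)} | q ≤ R1.length} := by
    ext p
    simp only [Finset.mem_filter, Finset.mem_range, Finset.mem_insert, List.length_append,
      List.length_cons]
    by_cases hp : p ≤ R1.length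
    · have e1 : (R1 ++ t :: R2).take p = R1.take p := List.take_append_of_le_length hp
      have e2 : (R1 ++ R2).take p = R1.take p := List.take_append_of_le_length hp
      have e3 : (R1 ++ t :: R2).drop p = R1.drop p ++ t :: R2 := List.drop_append_of_le_length hp
      have e4 : (R1 ++ R2).drop p = R1.drop p ++ R2 := List.drop_append_of_le_length hp
      rw [e1, e2, e3, e4]
      have : gR (R1.take p) (R1.drop p ++ t :: R2) ↔ gR (R1.take p) (R1.drop p ++ R2) := by
        constructor
        · intro h a ha b hb; exact h a ha b (by simp at hb ⊢; tauto)
        · intro h a ha b hb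
          by_cases hbt : b = t
          · have := ht a (List.mem_append_left _ (List.mem_of_mem_take ha)); omega
          · exact h a ha b (by simp at hb ⊢; tauto)
      rw [this]
      constructor
      · rintro ⟨_, h⟩; exact Or.inr ⟨⟨by omega, h⟩, hp⟩
      · rintro (h | h)
        · omega
        · exact ⟨by omega, h.1.2⟩
    · obtain ⟨q, rfl⟩ : ∃ q, p = R1.length + (q + 1) := ⟨p - R1.length - 1, by omega⟩
      rw [List.take_length_add_append, List.drop_length_add_append, List.take_succ_cons,
        List.drop_succ_cons]
      constructor
      · rintro ⟨h, g⟩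
        by_cases hq : q < R2.length
        · exfalso
          have hm : R2[q] ∈ R2.drop q := by
            rw [List.drop_eq_getElem_cons hq]; exact List.mem_cons_self
          refine g t (by simp) _ hm (ht _ (by simp))
        · left; omega
      · rintro (h | h)
        · refine ⟨by omega, ?_⟩
          rw [List.drop_eq_nil_of_le (by omega)]
          simp [gR]
        · omega
  rw [this, Finset.card_insert_of_notMem]
  simp

theorem sum_rank (S : Finset ℕ) (f : ℕ → ℕ) :
    ∑ p ∈ S, f #{q ∈ S | q ≤ p} = ∑ i ∈ Finset.range #S, f (i + 1) := by
  induction S using Finset.induction_on_max with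
  | empty => simp
  | insert a s h ih =>
    have ha : a ∉ s := fun h' => lt_irrefl _ (h a h')
    rw [Finset.sum_insert ha, Finset.card_insert_of_notMem ha, Finset.sum_range_succ, ← ih,
      add_comm]
    congr 1
    · refine Finset.sum_congr rfl fun p hp => ?_
      rw [Finset.filter_insert, if_neg (by have := h p hp; omega)]
    · rw [Finset.filter_true_of_mem, Finset.card_insert_of_notMem ha]
      intro x hx
      rcases Finset.mem_insert.1 hx with rfl | hx
      · exact le_rfl
      · exact (h x hx).le

end PP
namespace PP
open St
open scoped List

theorem sum_partL {L R : List ℕ} {t : ℕ} (ht : ∀ x ∈ L, x < t) (hR : ∀ x ∈ R, x < t)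
    (hv : Valid L R) (f : ℕ → ℕ) (G : List ℕ → ℕ)
    (hG : ∀ p ≤ L.length, gL R (L.take p) →
      G (L.take p ++ t :: L.drop p) = f (nL (L.take p ++ t :: L.drop p) R)) :
    open Classical in
    (∑ p ∈ Finset.range (L.length + 1), if Valid (L.take p ++ t :: L.drop p) R then
      G (L.take p ++ t :: L.drop p) else 0) =
      ∑ i ∈ Finset.range (nL L R), f (i + 2) := by
  classical
  have h1 : (∑ p ∈ Finset.range (L.length + 1), if Valid (L.take p ++ t :: L.drop p) R then
      G (L.take p ++ t :: L.drop p) else 0) =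
      ∑ p ∈ Finset.range (L.length + 1), if gL R (L.take p) then
        (if p = 0 then f (nL L R + 1) else f (p + 1)) else 0 := by
    refine Finset.sum_congr rfl fun p hp => ?_
    have hp' : p ≤ L.length := by simp at hp; omega
    have : Valid (L.take p ++ t :: L.drop p) R ↔ gL R (L.take p) := by
      rw [valid_insL (by simpa using ht) hR]
      simp [hv]
    simp only [this]
    split_ifs with hg h0
    · subst h0
      rw [hG 0 hp' hg]
      simp [nL_cons ht hR]
    · have e : (L.take p).length = p := by simp [hp']
      rw [hG p hp' hg, nL_ins _ hg (fun x hx => ht x (List.mem_of_mem_take hx)), e]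
      intro h; rw [h] at e; simp at e; omega
    · rfl
  rw [h1, sum_L]
  obtain ⟨k, hk⟩ := nL_pos L R
  rw [hk, Finset.sum_range_succ', Finset.sum_range_succ]
  simp

theorem sum_partR {L R : List ℕ} {t : ℕ} (ht : ∀ x ∈ L, x < t) (hR : ∀ x ∈ R, x < t)
    (hv : Valid L R) (hh : ¬ High L R) (f : ℕ → ℕ) (G : List ℕ → ℕ)
    (hG : ∀ p ≤ R.length, gR (R.take p) (R.drop p) →
      G (R.take p ++ t :: R.drop p) = f (sR (R.take p ++ t :: R.drop p))) :
    open Classical in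
    (∑ p ∈ Finset.range (R.length + 1), if Valid L (R.take p ++ t :: R.drop p) then
      G (R.take p ++ t :: R.drop p) else 0) =
      ∑ i ∈ Finset.range (sR R), f (i + 2) := by
  classical
  have h1 : (∑ p ∈ Finset.range (R.length + 1), if Valid L (R.take p ++ t :: R.drop p) then
      G (R.take p ++ t :: R.drop p) else 0) =
      ∑ p ∈ Finset.range (R.length + 1), if gR (R.take p) (R.drop p) then
        f (#{q ∈ {p ∈ Finset.range (R.length + 1) | gR (R.take p) (R.drop p)} | q ≤ p} + 1)
        else 0 := by
    refine Finset.sum_congr rfl fun p hp => ?_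
    have hp' : p ≤ R.length := by simp at hp; omega
    have : Valid L (R.take p ++ t :: R.drop p) ↔ gR (R.take p) (R.drop p) := by
      rw [valid_insR (by simpa using hR) ht]
      simp only [List.take_append_drop, hv, true_and, and_iff_left_iff_imp]
      intro _ a ha b hb hab
      exact hh ⟨a, ha, b, List.mem_of_mem_drop hb, hab⟩
    simp only [this]
    split_ifs with hg
    · have e : (R.take p).length = p := by simp [hp']
      rw [hG p hp' hg, sR_ins (by simpa using hR), e, List.take_append_drop]
    · rfl
  rw [h1, ← Finset.sum_filter, sum_rank _ (fun x => f (x + 1))]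
  rfl

theorem nL_high {L R : List ℕ} {t : ℕ} (ht : ∀ x ∈ L, x < t) (hR : t ∈ R) : nL L R = 1 := by
  classical
  unfold nL
  have : {p ∈ Finset.range (L.length + 1) | gL R (L.take p)} = {0} := by
    ext p
    simp only [Finset.mem_filter, Finset.mem_range, Finset.mem_singleton]
    constructor
    · rintro ⟨hp, h⟩
      by_contra h0
      have hl : (L.take p).length = p := by simp; omega
      have : L.take p ≠ [] := by
        intro h; rw [h] at hl; simp at hl; omega
      obtain ⟨x, hx⟩ := List.exists_mem_of_ne_nil _ this
      exact h.2 x hx t hR (ht x (List.mem_of_mem_take hx))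
    · rintro rfl; simp [gL_nil]
  rw [this]; simp

theorem st_high {L R : List ℕ} {t : ℕ} (h0 : L ≠ []) (ht : ∀ x ∈ L, x < t) (hR : t ∈ R) :
    st L R = high 1 := by
  obtain ⟨x, hx⟩ := List.exists_mem_of_ne_nil _ h0
  rw [st, if_neg h0, if_pos ⟨x, hx, t, hR, ht x hx⟩, nL_high ht hR]

theorem high_ins {L1 L2 R : List ℕ} {t : ℕ} (hR : ∀ x ∈ R, x < t) :
    High (L1 ++ t :: L2) R ↔ High (L1 ++ L2) R := by
  constructor
  · rintro ⟨a, ha, c, hc, h⟩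
    have hat : a ≠ t := by rintro rfl; have := hR c hc; omega
    exact ⟨a, by simp at ha ⊢; tauto, c, hc, h⟩
  · rintro ⟨a, ha, c, hc, h⟩
    exact ⟨a, by simp at ha ⊢; tauto, c, hc, h⟩

theorem sR_pos (R : List ℕ) : gR (R.take R.length) (R.drop R.length) := by
  simp [gR]

theorem keysum {L R : List ℕ} {t : ℕ} (ht : ∀ x ∈ L, x < t) (hR : ∀ x ∈ R, x < t)
    (hv : Valid L R) (F : St → ℕ) :
    open Classical in
    (∑ p ∈ Finset.range (L.length + 1), if Valid (L.take p ++ t :: L.drop p) R then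
      F (st (L.take p ++ t :: L.drop p) R) else 0) +
    (∑ p ∈ Finset.range (R.length + 1), if Valid L (R.take p ++ t :: R.drop p) then
      F (st L (R.take p ++ t :: R.drop p)) else 0) = T F (st L R) := by
  classical
  by_cases h0 : L = []
  · subst h0
    have hh : ¬ High [] R := by simp [High]
    have hs : st [] R = low (sR R) := by simp [st]
    rw [hs, T, add_comm]
    congr 1
    · rw [sum_partR ht hR hv hh (fun i => F (low i)) (fun R' => F (st [] R'))]
      intro p _ _; simp [st]
    · rw [sum_partL ht hR hv (fun i => F (mid i (sR R))) (fun L' => F (st L' R))]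
      · have : nL [] R = 1 := by simp [nL, gL_nil]
        rw [this]; simp
      · intro p _ _
        rw [st, if_neg (by simp), if_neg]
        rw [high_ins hR]; simp [High]
  · by_cases hh : High L R
    · have hs : st L R = high (nL L R) := by simp [st, h0, hh]
      rw [hs, T]
      congr 1
      · rw [sum_partL ht hR hv (fun i => F (high i)) (fun L' => F (st L' R))]
        intro p _ _
        rw [st, if_neg (by simp), if_pos]
        rw [high_ins hR]; simpa using hh
      · rw [Finset.sum_eq_single R.length]
        · rw [if_pos, st_high (t := t) h0 ht (by simp)]
          rw [valid_insR (by simpa using hR) ht]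
          simp [hv, gR]
        · intro p hp hne
          rw [if_neg]
          rw [valid_insR (by simpa using hR) ht]
          rintro ⟨-, g1, g2⟩
          obtain ⟨a, ha, c, hc, hac⟩ := hh
          have hp' : p < R.length := by simp at hp; omega
          rw [← List.take_append_drop p R, List.mem_append] at hc
          rcases hc with hc | hc
          · have hm : R[p] ∈ R.drop p := by
              rw [List.drop_eq_getElem_cons hp']; exact List.mem_cons_self
            have i1 := g1 c hc _ hm
            have i2 := g2 a ha _ hm
            omega
          · exact g2 a ha c hc hac
        · simp
    · have hs : st L R = mid (nL L R) (sR R) := by simp [st, h0, hh]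
      rw [hs, T]
      congr 1
      · rw [sum_partL ht hR hv (fun i => F (mid i (sR R))) (fun L' => F (st L' R))]
        intro p _ _
        rw [st, if_neg (by simp), if_neg]
        rw [high_ins hR]; simpa using hh
      · rw [sum_partR ht hR hv hh (fun _ => F (high 1)) (fun R' => F (st L R'))]
        · simp
        · intro p _ _
          rw [st_high (t := t) h0 ht (by simp)]

/-- part left of the hole -/
def lw (w : List ℕ) : List ℕ := w.takeWhile (· ≠ 0)

/-- part right of the hole -/
def rgt (w : List ℕ) : List ℕ := (w.dropWhile (· ≠ 0)).tail

theorem lw_app {L R : List ℕ} (h : 0 ∉ L) : lw (L ++ 0 :: R) = L := by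
  unfold lw
  rw [List.takeWhile_append_of_pos]
  · simp
  · intro a ha; simp; rintro rfl; exact h ha

theorem rw_app {L R : List ℕ} (h : 0 ∉ L) : rgt (L ++ 0 :: R) = R := by
  unfold rgt
  rw [List.dropWhile_append_of_pos]
  · simp
  · intro a ha; simp; rintro rfl; exact h ha

/-- the list `[N, ..., 1, 0]` -/
def desc : ℕ → List ℕ
  | 0 => [0]
  | N + 1 => (N + 1) :: desc N

theorem mem_desc (N x : ℕ) : x ∈ desc N ↔ x ≤ N := by
  induction N with
  | zero => simp [desc]
  | succ N ih => simp [desc, ih]; omega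

theorem nodup_desc (N : ℕ) : (desc N).Nodup := by
  induction N with
  | zero => simp [desc]
  | succ N ih => simp [desc, ih, mem_desc]

open Classical in
/-- weight of a word -/
noncomputable def wt (F : St → ℕ) (w : List ℕ) : ℕ :=
  if Valid (lw w) (rgt w) then F (st (lw w) (rgt w)) else 0

theorem split_word {N : ℕ} {w : List ℕ} (h : w ~ desc N) :
    ∃ L R, w = L ++ 0 :: R ∧ 0 ∉ L ∧ 0 ∉ R ∧ (∀ x ∈ L, x < N + 1) ∧ (∀ x ∈ R, x < N + 1) := by
  have h0 : 0 ∈ w := h.mem_iff.2 ((mem_desc N 0).2 (Nat.zero_le _))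
  have hm : ∀ x ∈ w, x < N + 1 := fun x hx => by
    have := (mem_desc N x).1 (h.mem_iff.1 hx); omega
  have hnd : w.Nodup := h.nodup_iff.2 (nodup_desc N)
  obtain ⟨L, R, rfl⟩ := List.append_of_mem h0
  refine ⟨L, R, rfl, ?_, ?_, fun x hx => hm x (by simp [hx]), fun x hx => hm x (by simp [hx])⟩
  · intro hc
    rw [List.nodup_append] at hnd
    exact hnd.2.2 0 hc 0 (by simp) rfl
  · rw [List.nodup_append] at hnd
    exact (List.nodup_cons.1 hnd.2.1).1

theorem wt_step {N : ℕ} {w : List ℕ} (h : w ~ desc N) (F : St → ℕ) :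
    ((List.permutations'Aux (N + 1) w).map (wt F)).sum = wt (T F) w := by
  classical
  obtain ⟨L, R, rfl, h0, h0', hL, hR⟩ := split_word h
  rw [perm'Aux_append, List.map_append, List.sum_append, List.map_map, List.map_map,
    sum_perm'Aux, sum_perm'Aux]
  have e1 : ∀ p, 0 ∉ L.take p ++ (N + 1) :: L.drop p := by
    intro p hp
    simp only [List.mem_append, List.mem_cons] at hp
    rcases hp with hp | hp | hp
    · exact h0 (List.mem_of_mem_take hp)
    · omega
    · exact h0 (List.mem_of_mem_drop hp)
  simp only [Function.comp_apply, wt, lw_app (e1 _), rw_app (e1 _), lw_app h0, rw_app h0]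
  by_cases hv : Valid L R
  · rw [if_pos hv]
    exact keysum hL hR hv F
  · rw [if_neg hv]
    have z1 : ∀ p, ¬ Valid (L.take p ++ (N + 1) :: L.drop p) R := by
      intro p
      rw [valid_insL (by simpa using hL) hR]
      simp [hv]
    have z2 : ∀ p, ¬ Valid L (R.take p ++ (N + 1) :: R.drop p) := by
      intro p
      rw [valid_insR (by simpa using hR) hL]
      simp [hv]
    simp [z1, z2]

theorem wt_total (N : ℕ) (m : ℕ) :
    ((desc N).permutations'.map (wt (V m))).sum = V (N + m) (low 1) := by
  induction N generalizing m with
  | zero =>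
    have hv : Valid [] [] := ⟨by simp, by simp, by simp, by simp⟩
    have hs : sR [] = 1 := by simp [sR, gR, Finset.filter_singleton]
    simp [desc, List.permutations', List.permutations'Aux, wt, lw, rgt, hv, st, hs]
  | succ N ih =>
    have : ((desc (N + 1)).permutations'.map (wt (V m))).sum =
        ((desc N).permutations'.map (wt (V (m + 1)))).sum := by
      rw [desc, List.permutations', List.map_flatMap, List.flatMap, List.sum_flatten, List.map_map]
      congr 1
      refine List.map_congr_left fun w hw => ?_
      exact wt_step (List.mem_permutations'.1 hw) (V m)
    rw [this, ih]
    congr 1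
    omega

theorem count_words (N : ℕ) :
    Nat.card {w : List ℕ // w ~ desc N ∧ Valid (lw w) (rgt w)} = V N (low 1) := by
  classical
  have h := wt_total N 0
  rw [add_zero] at h
  rw [← h]
  have hnd : (desc N).permutations'.Nodup := by
    rw [← (List.permutations_perm_permutations' (desc N)).nodup_iff]
    exact List.nodup_permutations _ (nodup_desc N)
  have : Nat.card {w : List ℕ // w ~ desc N ∧ Valid (lw w) (rgt w)} =
      #{w ∈ (desc N).permutations'.toFinset | Valid (lw w) (rgt w)} := by
    rw [← Nat.card_eq_finsetCard]
    refine Nat.card_congr (Equiv.subtypeEquivRight fun w => ?_)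
    simp [List.mem_permutations']
  rw [this, Finset.card_filter, List.sum_toFinset _ hnd]
  rfl

end PP
namespace PP
open St
open scoped List

theorem sub_zero_iff {l1 l2 L R : List ℕ} (h1 : 0 ∉ l1) (hL : 0 ∉ L) (hR : 0 ∉ R) :
    l1 ++ 0 :: l2 <+ L ++ 0 :: R ↔ l1 <+ L ∧ l2 <+ R := by
  constructor
  · intro h
    rcases sub_ins.1 h with h | ⟨m1, m2, e, s1, s2⟩
    · have : 0 ∈ L ++ R := h.subset (by simp)
      simp [hL, hR] at this
    · have hm : 0 ∉ m1 := fun h => hL (s1.subset h)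
      have e1 := congrArg lw e
      have e2 := congrArg rgt e
      rw [lw_app h1, lw_app hm] at e1
      rw [rw_app h1, rw_app hm] at e2
      subst e1 e2
      exact ⟨s1, s2⟩
  · rintro ⟨s1, s2⟩
    exact s1.append (s2.cons_cons 0)

/-- Forbidden configurations in a function with a unique zero (the hole). -/
def Bad {n : ℕ} (f : Fin n → ℕ) : Prop :=
  ∃ i j k l, i < j ∧ j < k ∧ k < l ∧
    ((f l = 0 ∧ 0 < f i ∧ f i < f j ∧ f j < f k) ∨
     (f i = 0 ∧ 0 < f l ∧ f l < f j ∧ f j < f k) ∨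
     (f j = 0 ∧ 0 < f i ∧ f i < f l ∧ f l < f k) ∨
     (f k = 0 ∧ 0 < f i ∧ f i < f l ∧ f l < f j))

theorem sub_ofFn {n : ℕ} (f : Fin n → ℕ) (x y z u : ℕ) :
    [x, y, z, u] <+ List.ofFn f ↔
      ∃ i j k l, i < j ∧ j < k ∧ k < l ∧ f i = x ∧ f j = y ∧ f k = z ∧ f l = u := by
  rw [List.sublist_iff_exists_fin_orderEmbedding_get_eq]
  constructor
  · rintro ⟨g, hg⟩
    have c : (List.ofFn f).length = n := List.length_ofFn
    refine ⟨Fin.cast c (g ⟨0, by simp⟩), Fin.cast c (g ⟨1, by simp⟩), Fin.cast c (g ⟨2, by simp⟩),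
      Fin.cast c (g ⟨3, by simp⟩), ?_, ?_, ?_, ?_, ?_, ?_, ?_⟩
    · exact g.strictMono (by simp)
    · exact g.strictMono (by simp)
    · exact g.strictMono (by simp)
    · have := hg ⟨0, by simp⟩; simp at this; exact this.symm
    · have := hg ⟨1, by simp⟩; simp at this; exact this.symm
    · have := hg ⟨2, by simp⟩; simp at this; exact this.symm
    · have := hg ⟨3, by simp⟩; simp at this; exact this.symm
  · rintro ⟨i, j, k, l, h1, h2, h3, rfl, rfl, rfl, rfl⟩
    have c : n = (List.ofFn f).length := List.length_ofFn.symm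
    have hm : StrictMono (fun q : Fin 4 => Fin.cast c (![i, j, k, l] q)) := by
      rw [Fin.strictMono_iff_lt_succ]
      intro q
      fin_cases q
      · exact h1
      · exact h2
      · exact h3
    refine ⟨OrderEmbedding.ofStrictMono _ hm, ?_⟩
    intro q
    change Fin 4 at q
    fin_cases q <;> simp

theorem valid_iff {N : ℕ} (f : Fin (N + 1) → ℕ) (h : List.ofFn f ~ desc N) :
    Valid (lw (List.ofFn f)) (rgt (List.ofFn f)) ↔ ¬ Bad f := by
  obtain ⟨L, R, e, h0, h0', hL, hR⟩ := split_word h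
  have key := sub_ofFn f
  rw [e] at key ⊢
  rw [lw_app h0, rw_app h0]
  constructor
  · rintro hv ⟨i, j, k, l, h1, h2, h3, ⟨q1, q2, q3, q4⟩ | ⟨q1, q2, q3, q4⟩ | ⟨q1, q2, q3, q4⟩ |
      ⟨q1, q2, q3, q4⟩⟩
    · have s := (key (f i) (f j) (f k) 0).2 ⟨i, j, k, l, h1, h2, h3, rfl, rfl, rfl, q1⟩
      have s' := (sub_zero_iff (l1 := [f i, f j, f k]) (l2 := [])
        (by simp; omega) h0 h0').1 s
      exact hv.h1 _ _ _ s'.1 q3 q4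
    · have s := (key 0 (f j) (f k) (f l)).2 ⟨i, j, k, l, h1, h2, h3, q1, rfl, rfl, rfl⟩
      have s' := (sub_zero_iff (l1 := []) (l2 := [f j, f k, f l])
        (by simp) h0 h0').1 s
      exact hv.h2 _ _ _ s'.2 q3 q4
    · have s := (key (f i) 0 (f k) (f l)).2 ⟨i, j, k, l, h1, h2, h3, rfl, q1, rfl, rfl⟩
      have s' := (sub_zero_iff (l1 := [f i]) (l2 := [f k, f l])
        (by simp; omega) h0 h0').1 s
      exact hv.h3 _ _ _ (by simpa using s'.1) s'.2 q3 q4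
    · have s := (key (f i) (f j) 0 (f l)).2 ⟨i, j, k, l, h1, h2, h3, rfl, rfl, q1, rfl⟩
      have s' := (sub_zero_iff (l1 := [f i, f j]) (l2 := [f l])
        (by simp; omega) h0 h0').1 s
      exact hv.h4 _ _ _ s'.1 (by simpa using s'.2) q3 q4
  · intro hb
    have pL : ∀ x ∈ L, 0 < x := fun x hx => Nat.pos_of_ne_zero (by rintro rfl; exact h0 hx)
    have pR : ∀ x ∈ R, 0 < x := fun x hx => Nat.pos_of_ne_zero (by rintro rfl; exact h0' hx)
    refine ⟨?_, ?_, ?_, ?_⟩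
    · intro a b c hs hab hbc
      have : [a, b, c, 0] <+ L ++ 0 :: R := hs.append ((List.nil_sublist R).cons_cons 0)
      obtain ⟨i, j, k, l, h1, h2, h3, rfl, rfl, rfl, q⟩ := (key _ _ _ _).1 this
      exact hb ⟨i, j, k, l, h1, h2, h3, Or.inl ⟨q, pL _ (hs.subset (by simp)), hab, hbc⟩⟩
    · intro a b c hs hab hbc
      have : [0, b, c, a] <+ L ++ 0 :: R := (List.nil_sublist L).append (hs.cons_cons 0)
      obtain ⟨i, j, k, l, h1, h2, h3, q, rfl, rfl, rfl⟩ := (key _ _ _ _).1 this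
      exact hb ⟨i, j, k, l, h1, h2, h3, Or.inr (Or.inl
        ⟨q, pR _ (hs.subset (by simp)), hab, hbc⟩)⟩
    · intro a b c ha hs hab hbc
      have : [a, 0, c, b] <+ L ++ 0 :: R :=
        (List.singleton_sublist.2 ha).append (hs.cons_cons 0)
      obtain ⟨i, j, k, l, h1, h2, h3, rfl, q, rfl, rfl⟩ := (key _ _ _ _).1 this
      exact hb ⟨i, j, k, l, h1, h2, h3, Or.inr (Or.inr (Or.inl
        ⟨q, pL _ ha, hab, hbc⟩))⟩
    · intro a b c hs hb' hab hbc
      have : [a, c, 0, b] <+ L ++ 0 :: R :=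
        hs.append ((List.singleton_sublist.2 hb').cons_cons 0)
      obtain ⟨i, j, k, l, h1, h2, h3, rfl, rfl, q, rfl⟩ := (key _ _ _ _).1 this
      exact hb ⟨i, j, k, l, h1, h2, h3, Or.inr (Or.inr (Or.inr
        ⟨q, pL _ (hs.subset (by simp)), hab, hbc⟩))⟩

/-- encoding of letters: the hole is `0` -/
def enc {N : ℕ} : Option (Fin N) → ℕ
  | none => 0
  | some v => v + 1

theorem enc_inj {N : ℕ} : Function.Injective (enc (N := N)) := by
  intro a b h
  cases a <;> cases b <;> simp [enc] at h ⊢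
  exact Fin.ext h

theorem enc_le {N : ℕ} (a : Option (Fin N)) : enc a ≤ N := by
  cases a with
  | none => simp [enc]
  | some v => have := v.2; simp [enc]

theorem enc_zero {N : ℕ} {a : Option (Fin N)} : enc a = 0 ↔ a = none := by
  cases a <;> simp [enc]

theorem enc_surj {N x : ℕ} (h : x ≤ N) : ∃ a : Option (Fin N), enc a = x := by
  cases x with
  | zero => exact ⟨none, rfl⟩
  | succ x => exact ⟨some ⟨x, by omega⟩, rfl⟩

theorem isPPerm_iff {N : ℕ} (π : Fin (N + 1) → Option (Fin N)) :
    IsPPerm (n := N + 1) 1 π ↔ List.ofFn (fun i => enc (π i)) ~ desc N := by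
  have hperm : List.ofFn (fun i => enc (π i)) ~ desc N ↔ Function.Bijective π := by
    constructor
    · intro h
      have hnd := h.nodup_iff.2 (nodup_desc N)
      rw [List.nodup_ofFn] at hnd
      refine ⟨fun i j hij => hnd (by simp [hij]), fun a => ?_⟩
      have : enc a ∈ List.ofFn (fun i => enc (π i)) :=
        h.mem_iff.2 ((mem_desc N _).2 (enc_le a))
      obtain ⟨i, hi⟩ := (List.mem_ofFn' _ _).1 this
      exact ⟨i, enc_inj hi⟩
    · intro h
      have hnd : (List.ofFn (fun i => enc (π i))).Nodup := List.nodup_ofFn.2 (enc_inj.comp h.1)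
      rw [List.perm_ext_iff_of_nodup hnd (nodup_desc N)]
      intro x
      rw [mem_desc, List.mem_ofFn']
      constructor
      · rintro ⟨i, rfl⟩; exact enc_le _
      · intro hx
        obtain ⟨a, rfl⟩ := enc_surj hx
        obtain ⟨i, rfl⟩ := h.2 a
        exact ⟨i, rfl⟩
  rw [hperm]
  unfold IsPPerm
  rw [Finset.card_eq_one]
  constructor
  · rintro ⟨⟨h, hh⟩, hv⟩
    have hn : ∀ i, π i = none ↔ i = h := by
      intro i
      have := congrArg (i ∈ ·) hh
      simpa using this
    constructor
    · intro i j hij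
      cases hi : π i with
      | none => rw [(hn i).1 hi, (hn j).1 (hij ▸ hi)]
      | some v => exact (hv v).unique hi (hij ▸ hi)
    · intro a
      cases a with
      | none => exact ⟨h, (hn h).2 rfl⟩
      | some v => exact (hv v).exists
  · intro hb
    constructor
    · obtain ⟨h, hh⟩ := hb.2 none
      refine ⟨h, ?_⟩
      ext i
      simp only [Finset.mem_filter, Finset.mem_univ, true_and, Finset.mem_singleton]
      rw [← hh]
      exact hb.1.eq_iff
    · intro v
      obtain ⟨i, hi⟩ := hb.2 (some v)
      exact ⟨i, hi, fun j hj => hb.1 (hj.trans hi.symm)⟩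

theorem contains_iff {n : ℕ} (σ : Fin n → Fin n) (hσ : Function.Injective σ) :
    ContainsPat σ (![0, 2, 3, 1] : Fin 4 → Fin 4) ↔
      ∃ i j k l, i < j ∧ j < k ∧ k < l ∧ σ i < σ l ∧ σ l < σ j ∧ σ j < σ k := by
  constructor
  · rintro ⟨g, hg, h⟩
    refine ⟨g 0, g 1, g 2, g 3, hg (by decide), hg (by decide), hg (by decide), ?_, ?_, ?_⟩
    · exact (h 0 3).2 (by decide)
    · exact (h 3 1).2 (by decide)
    · exact (h 1 2).2 (by decide)
  · rintro ⟨i, j, k, l, h1, h2, h3, q1, q2, q3⟩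
    refine ⟨![i, j, k, l], ?_, ?_⟩
    · rw [Fin.strictMono_iff_lt_succ]
      intro q
      fin_cases q
      · exact h1
      · exact h2
      · exact h3
    · intro a b
      have := q1.trans q2
      have := q2.trans q3
      have := q1.trans (q2.trans q3)
      fin_cases a <;> fin_cases b <;> simp [*, le_of_lt]

theorem isExt_iff {N : ℕ} (σ : Equiv.Perm (Fin (N + 1))) (π : Fin (N + 1) → Option (Fin N)) :
    IsExtension σ π ↔ ∀ i j, 0 < enc (π i) → 0 < enc (π j) →
      (σ i < σ j ↔ enc (π i) < enc (π j)) := by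
  constructor
  · intro h i j hi hj
    cases ei : π i with
    | none => simp [ei, enc] at hi
    | some v =>
      cases ej : π j with
      | none => simp [ej, enc] at hj
      | some u => rw [h i j v u ei ej]; simp [enc]
  · intro h i j v u ei ej
    rw [h i j (by simp [ei, enc]) (by simp [ej, enc]), ei, ej]
    simp [enc]

theorem exists_ext {N : ℕ} (π : Fin (N + 1) → Option (Fin N)) (hπ : Function.Injective π)
    (v : ℕ) (hv : v ≤ N) : ∃ σ : Equiv.Perm (Fin (N + 1)), IsExtension σ π ∧
      (∀ i, enc (π i) = 0 → (σ i : ℕ) = v) ∧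
      (∀ i, 0 < enc (π i) → enc (π i) ≤ v → (σ i : ℕ) + 1 = enc (π i)) ∧
      (∀ i, v < enc (π i) → (σ i : ℕ) = enc (π i)) := by
  have hlt : ∀ i, (if enc (π i) = 0 then v else if enc (π i) ≤ v then enc (π i) - 1
      else enc (π i)) < N + 1 := by
    intro i
    have := enc_le (π i)
    split_ifs <;> omega
  let s : Fin (N + 1) → Fin (N + 1) := fun i => ⟨_, hlt i⟩
  have hs : ∀ i, (s i : ℕ) = if enc (π i) = 0 then v else if enc (π i) ≤ v then enc (π i) - 1
      else enc (π i) := fun i => rfl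
  have hinj : Function.Injective s := by
    intro i j hij
    have h := congrArg Fin.val hij
    rw [hs, hs] at h
    apply hπ
    apply enc_inj
    split_ifs at h <;> omega
  refine ⟨Equiv.ofBijective s (Finite.injective_iff_bijective.1 hinj), ?_, ?_, ?_, ?_⟩
  · rw [isExt_iff]
    intro i j hi hj
    simp only [Equiv.ofBijective_apply, Fin.lt_def, hs]
    split_ifs <;> omega
  · intro i hi
    simp [hs, hi]
  · intro i hi hi'
    simp only [Equiv.ofBijective_apply, hs]
    split_ifs <;> omega
  · intro i hi
    simp only [Equiv.ofBijective_apply, hs]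
    split_ifs <;> omega

theorem avoids_iff {N : ℕ} (π : Fin (N + 1) → Option (Fin N)) (hπ : Function.Bijective π) :
    PPAvoids π (![0, 2, 3, 1] : Fin 4 → Fin 4) ↔ ¬ Bad (fun i => enc (π i)) := by
  constructor
  · rintro h ⟨i, j, k, l, h1, h2, h3, hc⟩
    suffices ∃ v ≤ N, ∀ σ : Equiv.Perm (Fin (N + 1)),
        (∀ i, enc (π i) = 0 → (σ i : ℕ) = v) →
        (∀ i, 0 < enc (π i) → enc (π i) ≤ v → (σ i : ℕ) + 1 = enc (π i)) →
        (∀ i, v < enc (π i) → (σ i : ℕ) = enc (π i)) →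
        σ i < σ l ∧ σ l < σ j ∧ σ j < σ k by
      obtain ⟨v, hv, H⟩ := this
      obtain ⟨σ, s0, s1, s2, s3⟩ := exists_ext π hπ.1 v hv
      exact h σ s0 ((contains_iff σ σ.injective).2 ⟨i, j, k, l, h1, h2, h3, H σ s1 s2 s3⟩)
    have bi := enc_le (π i)
    have bj := enc_le (π j)
    have bk := enc_le (π k)
    have bl := enc_le (π l)
    simp only [Fin.lt_def]
    beta_reduce at hc
    rcases hc with ⟨q1, q2, q3, q4⟩ | ⟨q1, q2, q3, q4⟩ | ⟨q1, q2, q3, q4⟩ | ⟨q1, q2, q3, q4⟩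
    · refine ⟨enc (π i), bi, fun σ s1 s2 s3 => ?_⟩
      have := s1 l q1
      have := s2 i q2 le_rfl
      have := s3 j q3
      have := s3 k (q3.trans q4)
      omega
    · refine ⟨0, Nat.zero_le _, fun σ s1 s2 s3 => ?_⟩
      have := s1 i q1
      have := s3 j (by omega)
      have := s3 k (by omega)
      have := s3 l (by omega)
      omega
    · refine ⟨enc (π l), bl, fun σ s1 s2 s3 => ?_⟩
      have := s1 j q1
      have := s2 i q2 (by omega)
      have := s2 l (by omega) (by omega)
      have := s3 k (by omega)
      omega
    · refine ⟨N, le_rfl, fun σ s1 s2 s3 => ?_⟩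
      have := s1 k q1
      have := s2 i q2 (by omega)
      have := s2 l (by omega) (by omega)
      have := s2 j (by omega) (by omega)
      omega
  · intro hb σ hσ hc
    rw [isExt_iff] at hσ
    obtain ⟨i, j, k, l, h1, h2, h3, q1, q2, q3⟩ := (contains_iff σ σ.injective).1 hc
    obtain ⟨h, hh⟩ := hπ.2 none
    have e0 : enc (π h) = 0 := by rw [hh]; rfl
    have pos : ∀ x, x ≠ h → 0 < enc (π x) := by
      intro x hx
      refine Nat.pos_of_ne_zero fun h0 => hx (hπ.1 ?_)
      rw [hh]; exact enc_zero.1 h0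
    have ord : ∀ x y, x ≠ h → y ≠ h → σ x < σ y → enc (π x) < enc (π y) :=
      fun x y hx hy => (hσ x y (pos x hx) (pos y hy)).1
    have p1 := q1.trans q2
    have p2 := q2.trans q3
    have r1 : i ≠ h → l ≠ h → enc (π i) < enc (π l) := fun a b => ord _ _ a b q1
    have r2 : l ≠ h → j ≠ h → enc (π l) < enc (π j) := fun a b => ord _ _ a b q2
    have r3 : j ≠ h → k ≠ h → enc (π j) < enc (π k) := fun a b => ord _ _ a b q3
    have r4 : i ≠ h → j ≠ h → enc (π i) < enc (π j) := fun a b => ord _ _ a b p1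
    have r5 : l ≠ h → k ≠ h → enc (π l) < enc (π k) := fun a b => ord _ _ a b p2
    apply hb
    by_cases c1 : h ≤ i
    · have n2 : j ≠ h := by omega
      have n3 : k ≠ h := by omega
      have n4 : l ≠ h := by omega
      exact ⟨h, j, k, l, by omega, h2, h3, Or.inr (Or.inl ⟨e0, pos l n4, r2 n4 n2, r3 n2 n3⟩)⟩
    have n1 : i ≠ h := by omega
    by_cases c2 : h ≤ j
    · have n3 : k ≠ h := by omega
      have n4 : l ≠ h := by omega
      exact ⟨i, h, k, l, by omega, by omega, h3,
        Or.inr (Or.inr (Or.inl ⟨e0, pos i n1, r1 n1 n4, r5 n4 n3⟩))⟩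
    have n2 : j ≠ h := by omega
    by_cases c3 : h < l
    · have n4 : l ≠ h := by omega
      exact ⟨i, j, h, l, by omega, by omega, c3,
        Or.inr (Or.inr (Or.inr ⟨e0, pos i n1, r1 n1 n4, r2 n4 n2⟩))⟩
    · have n3 : k ≠ h := by omega
      exact ⟨i, j, k, h, by omega, by omega, by omega,
        Or.inl ⟨e0, pos i n1, r4 n1 n2, r3 n2 n3⟩⟩

theorem bij_of_pperm {N : ℕ} (π : Fin (N + 1) → Option (Fin N))
    (h : List.ofFn (fun i => enc (π i)) ~ desc N) : Function.Bijective π := by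
  have hnd := h.nodup_iff.2 (nodup_desc N)
  rw [List.nodup_ofFn] at hnd
  refine ⟨fun i j hij => hnd (by simp [hij]), fun a => ?_⟩
  have : enc a ∈ List.ofFn (fun i => enc (π i)) :=
    h.mem_iff.2 ((mem_desc N _).2 (enc_le a))
  obtain ⟨i, hi⟩ := (List.mem_ofFn' _ _).1 this
  exact ⟨i, enc_inj hi⟩

theorem length_desc (N : ℕ) : (desc N).length = N + 1 := by
  induction N with
  | zero => simp [desc]
  | succ N ih => simp [desc, ih]

theorem snk_eq (N : ℕ) : snk (N + 1) 1 (![0, 2, 3, 1] : Fin 4 → Fin 4) = V N (low 1) := by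
  rw [← count_words, snk]
  have iff : ∀ π : Fin (N + 1) → Option (Fin N),
      (IsPPerm (n := N + 1) 1 π ∧ PPAvoids π (![0, 2, 3, 1] : Fin 4 → Fin 4)) ↔
      (List.ofFn (fun i => enc (π i)) ~ desc N ∧
        Valid (lw (List.ofFn (fun i => enc (π i)))) (rgt (List.ofFn (fun i => enc (π i))))) := by
    intro π
    rw [isPPerm_iff]
    refine and_congr_right fun h => ?_
    rw [valid_iff _ h, avoids_iff _ (bij_of_pperm π h)]
  refine Nat.card_congr (Equiv.ofBijective (fun π => ⟨List.ofFn (fun i => enc (π.1 i)),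
    (iff π.1).1 π.2⟩) ⟨?_, ?_⟩)
  · intro π ρ h
    have h' := List.ofFn_injective (congrArg Subtype.val h)
    apply Subtype.ext
    funext i
    exact enc_inj (congrFun h' i)
  · rintro ⟨w, hw, hv⟩
    have hlen : w.length = N + 1 := by rw [hw.length_eq, length_desc]
    have hx : ∀ i : Fin (N + 1), ∃ a : Option (Fin N), enc a = w[(i : ℕ)]'(by omega) := by
      intro i
      refine enc_surj ((mem_desc N _).1 (hw.mem_iff.1 (List.getElem_mem _)))
    choose π hπ using hx
    have e : List.ofFn (fun i => enc (π i)) = w := by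
      apply List.ext_getElem
      · simp [hlen]
      · intro i h1 h2
        rw [List.getElem_ofFn, hπ]
    refine ⟨⟨π, (iff π).2 (by rw [e]; exact ⟨hw, hv⟩)⟩, Subtype.ext e⟩

end PP

/-- `s_n^1(1342) = C(2n-2, n-1) - C(2n-2, n-5)` for `n ≥ 1` (the second
binomial coefficient being `0` when `n - 5` is negative). -/
theorem count_1342_one_hole (n : ℕ) (hn : 1 ≤ n) :
    snk n 1 (![0, 2, 3, 1] : Fin 4 → Fin 4) =
      (2 * n - 2).choose (n - 1) -
        (if 5 ≤ n then (2 * n - 2).choose (n - 5) else 0) := by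
  obtain ⟨N, rfl⟩ : ∃ N, n = N + 1 := ⟨n - 1, by omega⟩
  rw [PP.snk_eq]
  have h := PP.final_num N
  have e : 2 * (N + 1) - 2 = 2 * N := by omega
  have e1 : N + 1 - 1 = N := by omega
  have e2 : N + 1 - 5 = N - 4 := by omega
  rw [e, e1, e2]
  simp only [PP.bz, Nat.zero_le, if_true, Nat.sub_zero] at h
  have e3 : (5 ≤ N + 1) ↔ (4 ≤ N) := by omega
  simp only [e3]
  omega
end

section
/- For n ≥ 1, the number of partial permutations of length n with one hole avoiding the pattern 2413 equals 2·binomial(2n,n)/(n+1) − 2^{n−1}, i.e., twice the n-th Catalan number minus 2^{n−1}. -/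
open Finset

/-- Conditions on the left part `L` relative to the values `B` of the right part. -/
def PF {α : Type*} [LinearOrder α] (B L : List α) : Prop :=
  L.Pairwise (fun a b => ∀ d ∈ B, ¬ (a < d ∧ d < b)) ∧
    L.Triplewise (fun a b c => ¬ (c < a ∧ a < b))

open Classical in
/-- The arrangements of `s` satisfying `PF B`. -/
noncomputable def FF {α : Type*} [LinearOrder α] (B s : List α) : Finset (List α) :=
  s.permutations.toFinset.filter (PF B)

lemma mem_FF {α : Type*} [LinearOrder α] (B s L : List α) :
    L ∈ FF B s ↔ L.Perm s ∧ PF B L := by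
  simp [FF]

lemma sorted_split {α : Type*} [LinearOrder α] {L1 L2 s : List α} (h : (L1 ++ L2).Perm s)
    (hs : s.Pairwise (· < ·)) (hlt : ∀ a ∈ L1, ∀ c ∈ L2, a < c) :
    L1.Perm (s.take L1.length) ∧ L2.Perm (s.drop L1.length) := by
  have hle : s.Pairwise (· ≤ ·) := hs.imp le_of_lt
  have e1 := List.mergeSort_perm L1 (· ≤ ·)
  have e2 := List.mergeSort_perm L2 (· ≤ ·)
  have hp : (L1.mergeSort (· ≤ ·) ++ L2.mergeSort (· ≤ ·)).Perm s := (e1.append e2).trans h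
  have hsort : (L1.mergeSort (· ≤ ·) ++ L2.mergeSort (· ≤ ·)).Pairwise (· ≤ ·) := by
    rw [List.pairwise_append]
    refine ⟨List.pairwise_mergeSort' _ _, List.pairwise_mergeSort' _ _, ?_⟩
    intro a ha c hc
    exact (hlt a (e1.mem_iff.1 ha) c (e2.mem_iff.1 hc)).le
  have := hp.eq_of_pairwise' hsort hle
  subst this
  constructor
  · rw [List.take_left' e1.length_eq]; exact e1.symm
  · rw [List.drop_left' e1.length_eq]; exact e2.symm

lemma PF_join {α : Type*} [LinearOrder α] {B L1 L2 : List α} {M : α}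
    (h1 : ∀ a ∈ L1, a < M) (h2 : ∀ a ∈ L2, a < M) (hlt : ∀ a ∈ L1, ∀ c ∈ L2, a < c) :
    PF B (L1 ++ M :: L2) ↔ PF B L1 ∧ PF B L2 ∧ ∀ a ∈ L1, ∀ d ∈ B, ¬ (a < d ∧ d < M) := by
  constructor
  · rintro ⟨h, h'⟩
    rw [List.pairwise_append, List.pairwise_cons] at h
    rw [List.triplewise_append, List.triplewise_cons] at h'
    exact ⟨⟨h.1, h'.1⟩, ⟨h.2.1.2, h'.2.1.2⟩, fun a ha => h.2.2 a ha M (by simp)⟩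
  · rintro ⟨⟨a1, a2⟩, ⟨b1, b2⟩, h⟩
    refine ⟨?_, ?_⟩
    · rw [List.pairwise_append, List.pairwise_cons]
      refine ⟨a1, ⟨?_, b1⟩, ?_⟩
      · intro c hc d hd ⟨h3, h4⟩
        exact absurd (h3.trans h4) (h2 c hc).not_gt
      · intro a ha c hc d hd ⟨h3, h4⟩
        rcases List.mem_cons.1 hc with rfl | hc
        · exact h a ha d hd ⟨h3, h4⟩
        · exact h a ha d hd ⟨h3, h4.trans (h2 c hc)⟩
    · rw [List.triplewise_append, List.triplewise_cons]
      refine ⟨a2, ⟨?_, b2⟩, ?_, ?_⟩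
      · exact List.pairwise_of_forall_mem_list (fun c hc c' hc' hh => absurd hh.2 (h2 c hc).not_gt)
      · intro a ha
        rw [List.pairwise_cons]
        refine ⟨fun c hc hh => absurd hh.1 (hlt a ha c hc).not_gt, ?_⟩
        exact List.pairwise_of_forall_mem_list
          (fun c hc c' hc' hh => absurd hh.1 (hlt a ha c' hc').not_gt)
      · intro c hc
        refine List.pairwise_of_forall_mem_list (fun a ha a' ha' hh => ?_)
        rcases List.mem_cons.1 hc with rfl | hc
        · exact absurd hh.1 (h1 a ha).not_gt
        · exact absurd hh.1 (hlt a ha c hc).not_gt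

/-- The decomposition of an arrangement at its maximum. -/
lemma FF_decomp {α : Type*} [LinearOrder α] {B s L : List α} {M : α}
    (hs : (s ++ [M]).Pairwise (· < ·)) (hL : L ∈ FF B (s ++ [M])) :
    ∃ L1 L2, L = L1 ++ M :: L2 ∧ L1 ∈ FF B (s.take L1.length) ∧ L2 ∈ FF B (s.drop L1.length) ∧
      L1.length ≤ s.length ∧ ∀ a ∈ L1, ∀ d ∈ B, ¬ (a < d ∧ d < M) := by
  obtain ⟨hp, hP⟩ := (mem_FF _ _ _).1 hL
  have hM : M ∈ L := hp.mem_iff.2 (by simp)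
  obtain ⟨L1, L2, rfl⟩ := List.append_of_mem hM
  have hp' : (L1 ++ L2).Perm s := by
    have : (M :: (L1 ++ L2)).Perm (M :: s) :=
      List.perm_middle.symm.trans (hp.trans (List.perm_append_singleton M s))
    exact this.cons_inv
  rw [List.pairwise_append] at hs
  obtain ⟨hs, -, hsM⟩ := hs
  have hnd : (L1 ++ L2).Nodup := hp'.nodup_iff.2 (hs.imp ne_of_lt)
  have h1 : ∀ a ∈ L1, a < M := fun a ha =>
    hsM a (hp'.mem_iff.1 (by simp [ha])) M (by simp)
  have h2 : ∀ a ∈ L2, a < M := fun a ha =>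
    hsM a (hp'.mem_iff.1 (by simp [ha])) M (by simp)
  have hlt : ∀ a ∈ L1, ∀ c ∈ L2, a < c := by
    intro a ha c hc
    have ht := hP.2
    rw [List.triplewise_append] at ht
    have := List.rel_of_pairwise_cons (ht.2.2.1 a ha) hc
    have hne : a ≠ c := (List.nodup_append.1 hnd).2.2 a ha c hc
    rcases lt_trichotomy a c with h | h | h
    · exact h
    · exact absurd h hne
    · exact absurd ⟨h, h1 a ha⟩ this
  obtain ⟨q1, q2⟩ := sorted_split hp' hs hlt
  obtain ⟨p1, p2, p3⟩ := (PF_join h1 h2 hlt).1 hP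
  refine ⟨L1, L2, rfl, (mem_FF _ _ _).2 ⟨q1, p1⟩, (mem_FF _ _ _).2 ⟨q2, p2⟩, ?_, p3⟩
  have := hp'.length_eq
  simp at this; omega

lemma FF_join {α : Type*} [LinearOrder α] {B s L1 L2 : List α} {M : α} {i : ℕ}
    (hs : (s ++ [M]).Pairwise (· < ·)) (h1 : L1 ∈ FF B (s.take i)) (h2 : L2 ∈ FF B (s.drop i))
    (h : ∀ a ∈ L1, ∀ d ∈ B, ¬ (a < d ∧ d < M)) : L1 ++ M :: L2 ∈ FF B (s ++ [M]) := by
  rw [mem_FF] at *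
  rw [List.pairwise_append] at hs
  obtain ⟨hs, -, hsM⟩ := hs
  have hts := List.take_append_drop i s
  have hlt : ∀ a ∈ L1, ∀ c ∈ L2, a < c := by
    intro a ha c hc
    rw [← hts, List.pairwise_append] at hs
    exact hs.2.2 a (h1.1.mem_iff.1 ha) c (h2.1.mem_iff.1 hc)
  refine ⟨?_, (PF_join ?_ ?_ hlt).2 ⟨h1.2, h2.2, h⟩⟩
  · refine List.perm_middle.trans (List.Perm.trans ?_ (List.perm_append_singleton M s).symm)
    refine List.Perm.cons _ ?_
    calc _ = L1 ++ L2 := rfl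
      _ |>.Perm (s.take i ++ s.drop i) := h1.1.append h2.1
      _ = s := hts
  · exact fun a ha => hsM a (List.mem_of_mem_take (h1.1.mem_iff.1 ha)) M (by simp)
  · exact fun a ha => hsM a (List.mem_of_mem_drop (h2.1.mem_iff.1 ha)) M (by simp)

lemma FF_length {α : Type*} [LinearOrder α] {B s L : List α} (h : L ∈ FF B s) :
    L.length = s.length := ((mem_FF _ _ _).1 h).1.length_eq

lemma FF_card_catalan {α : Type*} [LinearOrder α] (B : List α) (n : ℕ) : ∀ (s : List α),
    s.length = n → s.Pairwise (· < ·) →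
    (∀ x ∈ s, ∀ y ∈ s, ∀ b ∈ B, ¬ (x < b ∧ b < y)) → (FF B s).card = catalan n := by
  classical
  induction n using Nat.strong_induction_on with
  | _ n ih =>
  intro s hlen hs hB
  rcases s.eq_nil_or_concat with rfl | ⟨t, M, rfl⟩
  · subst hlen
    have : FF B [] = {[]} := by
      ext L; rw [mem_FF]; simp [PF]
      rintro rfl; simp
    simp [this]
  · rw [List.concat_eq_append] at *
    obtain ⟨k, rfl⟩ : ∃ k, n = k + 1 := ⟨t.length, by simp at hlen; omega⟩
    have htk : t.length = k := by simpa using hlen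
    have hts : t.Pairwise (· < ·) := (List.pairwise_append.1 hs).1
    have key : FF B (t ++ [M]) = (Finset.range (k + 1)).biUnion (fun i =>
        (FF B (t.take i) ×ˢ FF B (t.drop i)).image (fun p => p.1 ++ M :: p.2)) := by
      ext L
      simp only [Finset.mem_biUnion, Finset.mem_image, Finset.mem_product, Finset.mem_range,
        Prod.exists]
      constructor
      · intro hL
        obtain ⟨L1, L2, rfl, h1, h2, h3, -⟩ := FF_decomp hs hL
        exact ⟨L1.length, by omega, L1, L2, ⟨h1, h2⟩, rfl⟩
      · rintro ⟨i, hi, L1, L2, ⟨h1, h2⟩, rfl⟩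
        refine FF_join hs h1 h2 ?_
        intro a ha d hd
        refine hB a ?_ M (by simp) d hd
        have := List.mem_of_mem_take (((mem_FF _ _ _).1 h1).1.mem_iff.1 ha)
        simp [this]
    have hMt : M ∉ t := by
      intro hM
      have := (List.pairwise_append.1 hs).2.2 M hM M (by simp)
      exact lt_irrefl _ this
    have inj : ∀ {i j : ℕ} {p q : List α × List α},
        p ∈ FF B (t.take i) ×ˢ FF B (t.drop i) → q ∈ FF B (t.take j) ×ˢ FF B (t.drop j) →
        p.1 ++ M :: p.2 = q.1 ++ M :: q.2 → p = q := by
      intro i j p q hp hq he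
      rw [Finset.mem_product] at hp hq
      have hp1 : M ∉ p.1 := fun hM =>
        hMt (List.mem_of_mem_take (((mem_FF _ _ _).1 hp.1).1.mem_iff.1 hM))
      have hq1 : M ∉ q.1 := fun hM =>
        hMt (List.mem_of_mem_take (((mem_FF _ _ _).1 hq.1).1.mem_iff.1 hM))
      have hp2 : M ∉ p.2 := fun hM =>
        hMt (List.mem_of_mem_drop (((mem_FF _ _ _).1 hp.2).1.mem_iff.1 hM))
      have := (List.append_cons_inj_of_notMem hp1 hp2).1 he
      exact Prod.ext this.1 this.2.2
    rw [key, Finset.card_biUnion, catalan_succ']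
    · rw [Finset.Nat.sum_antidiagonal_eq_sum_range_succ (fun i j => catalan i * catalan j)]
      refine Finset.sum_congr rfl fun i hi => ?_
      have hi : i < k + 1 := Finset.mem_range.1 hi
      rw [Finset.card_image_of_injOn (fun p hp q hq => inj hp hq), Finset.card_product]
      rw [ih i hi (t.take i) (by simp; omega) (hts.sublist (List.take_sublist _ _)),
        ih (k - i) (by omega) (t.drop i) (by simp; omega) (hts.sublist (List.drop_sublist _ _))]
      · intro x hx y hy
        exact hB x (by simp [List.mem_of_mem_drop hx]) y (by simp [List.mem_of_mem_drop hy])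
      · intro x hx y hy
        exact hB x (by simp [List.mem_of_mem_take hx]) y (by simp [List.mem_of_mem_take hy])
    · intro i hi j hj hij
      rw [Function.onFun, Finset.disjoint_left]
      intro L hL hL'
      obtain ⟨p, hp, rfl⟩ := Finset.mem_image.1 hL
      obtain ⟨q, hq, he⟩ := Finset.mem_image.1 hL'
      have := inj hp hq he.symm
      subst this
      rw [Finset.mem_product] at hp hq
      have a1 := FF_length hp.1
      have a2 := FF_length hq.1
      simp at a1 a2 hi hj
      omega

lemma FF_card_drop {α : Type*} [LinearOrder α] (B : List α) (s : List α) (M : α)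
    (hs : (s ++ [M]).Pairwise (· < ·)) (hB : ∃ x ∈ s, ∃ b ∈ B, x < b ∧ b < M) :
    (FF B (s ++ [M])).card = (FF B s).card := by
  classical
  have : FF B (s ++ [M]) = (FF B s).image (fun L => M :: L) := by
    ext L
    rw [Finset.mem_image]
    constructor
    · intro hL
      obtain ⟨L1, L2, rfl, h1, h2, h3, h4⟩ := FF_decomp hs hL
      rcases L1 with _ | ⟨a, L1⟩
      · exact ⟨L2, by simpa using h2, rfl⟩
      · exfalso
        obtain ⟨x, hx, b, hb, hxb, hbM⟩ := hB
        rcases s with _ | ⟨y, s⟩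
        · simp at h3
        · have hy : y ∈ a :: L1 := by
            rw [((mem_FF _ _ _).1 h1).1.mem_iff]; simp
          refine h4 y hy b hb ⟨lt_of_le_of_lt ?_ hxb, hbM⟩
          rcases List.mem_cons.1 hx with rfl | hx
          · exact le_rfl
          · exact (List.rel_of_pairwise_cons (List.pairwise_append.1 hs).1 hx).le
    · rintro ⟨L, hL, rfl⟩
      have := FF_join (B := B) (L1 := []) (L2 := L) (i := 0) hs (by simp [mem_FF, PF])
        (by simpa using hL) (by simp)
      simpa using this
  rw [this, Finset.card_image_of_injective _ (List.cons_injective)]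

lemma FF_card_two {α : Type*} [LinearOrder α] (B s1 : List α) : ∀ s2 : List α,
    (s1 ++ s2).Pairwise (· < ·) →
    (∀ x ∈ s1, ∀ y ∈ s1, ∀ b ∈ B, ¬ (x < b ∧ b < y)) →
    (∀ y ∈ s2, ∃ x ∈ s1, ∃ b ∈ B, x < b ∧ b < y) →
    (FF B (s1 ++ s2)).card = catalan s1.length := by
  intro s2
  induction s2 using List.reverseRecOn with
  | nil => intro hs h _; rw [List.append_nil] at *; exact FF_card_catalan B _ s1 rfl hs h
  | append_singleton s2 M ih =>
    intro hs h h2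
    rw [← List.append_assoc] at hs ⊢
    rw [FF_card_drop B _ M hs, ih (List.pairwise_append.1 hs).1 h]
    · intro y hy; exact h2 y (by simp [hy])
    · obtain ⟨x, hx, b, hb⟩ := h2 M (by simp)
      exact ⟨x, by simp [hx], b, hb⟩

/-- Conditions on the right part `R` relative to the values `A` of the left part. -/
def PG {α : Type*} [LinearOrder α] (A R : List α) : Prop :=
  R.Pairwise (fun c d => ∀ a ∈ A, ¬ (c < a ∧ a < d)) ∧
    R.Triplewise (fun x y z => ¬ (y < z ∧ z < x))

open Classical in
/-- The arrangements of `t` satisfying `PG A`. -/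
noncomputable def GG {α : Type*} [LinearOrder α] (A t : List α) : Finset (List α) :=
  t.permutations.toFinset.filter (PG A)

lemma mem_GG {α : Type*} [LinearOrder α] (A t R : List α) :
    R ∈ GG A t ↔ R.Perm t ∧ PG A R := by
  simp [GG]

lemma PG_iff {α : Type*} [LinearOrder α] (A R : List α) :
    PG A R ↔ PF (A.map OrderDual.toDual) (R.reverse.map OrderDual.toDual) := by
  unfold PG PF
  rw [List.pairwise_map, List.triplewise_map, List.pairwise_reverse, List.triplewise_reverse]
  simp only [List.mem_map, forall_exists_index, and_imp, forall_apply_eq_imp_iff₂,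
    OrderDual.toDual_lt_toDual, not_and]
  constructor
  · rintro ⟨h1, h2⟩
    exact ⟨h1.imp (fun h a ha h3 h4 => h a ha h4 h3), h2.imp (fun h h3 h4 => h h4 h3)⟩
  · rintro ⟨h1, h2⟩
    exact ⟨h1.imp (fun h a ha h3 h4 => h a ha h4 h3), h2.imp (fun h h3 h4 => h h4 h3)⟩

lemma GG_card {α : Type*} [LinearOrder α] (A t : List α) :
    (GG A t).card = (FF (A.map OrderDual.toDual) (t.reverse.map OrderDual.toDual)).card := by
  refine Finset.card_nbij' (fun R => R.reverse.map OrderDual.toDual)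
    (fun L => (L.map OrderDual.ofDual).reverse) ?_ ?_ ?_ ?_
  · intro R hR
    have hR := (mem_GG _ _ _).1 hR
    refine (mem_FF _ _ _).2 ⟨?_, (PG_iff A R).1 hR.2⟩
    exact (((List.reverse_perm _).trans hR.1).trans (List.reverse_perm _).symm).map _
  · intro L hL
    have hL := (mem_FF _ _ _).1 hL
    refine (mem_GG _ _ _).2 ⟨?_, (PG_iff A _).2 ?_⟩
    · have := (hL.1.map OrderDual.ofDual)
      refine (List.reverse_perm _).trans (this.trans ?_)
      simp [Function.comp_def, List.reverse_perm]
    · simpa [Function.comp_def] using hL.2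
  · intro R _; simp [Function.comp_def]
  · intro R _; simp [Function.comp_def]

lemma dual_sorted {α : Type*} [LinearOrder α] {t : List α} (h : t.Pairwise (· < ·)) :
    (t.reverse.map OrderDual.toDual).Pairwise (· < ·) := by
  rw [List.pairwise_map, List.pairwise_reverse]
  exact h.imp (fun h => by simpa using h)

lemma GG_card_catalan {α : Type*} [LinearOrder α] (A t : List α)
    (hs : t.Pairwise (· < ·))
    (h : ∀ x ∈ t, ∀ y ∈ t, ∀ b ∈ A, ¬ (x < b ∧ b < y)) : (GG A t).card = catalan t.length := by
  rw [GG_card]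
  refine FF_card_catalan _ _ _ (by simp) (dual_sorted hs) ?_
  simp only [List.mem_map, List.mem_reverse, forall_exists_index, and_imp,
    forall_apply_eq_imp_iff₂, OrderDual.toDual_lt_toDual, not_and]
  intro x hx y hy b hb h1 h2
  exact h y hy x hx b hb ⟨h2, h1⟩

lemma GG_card_drop {α : Type*} [LinearOrder α] (A t : List α) (M : α)
    (hs : (M :: t).Pairwise (· < ·)) (h : ∃ x ∈ t, ∃ a ∈ A, M < a ∧ a < x) :
    (GG A (M :: t)).card = (GG A t).card := by
  rw [GG_card, GG_card]
  have := dual_sorted hs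
  rw [List.reverse_cons, List.map_append] at this ⊢
  refine FF_card_drop _ _ _ this ?_
  obtain ⟨x, hx, a, ha, h1, h2⟩ := h
  exact ⟨OrderDual.toDual x, by simp [hx], OrderDual.toDual a, by simp [ha], by simp [h1, h2]⟩

/-- The sublist of `s` of the entries labelled `c` by the word `w`. -/
def sel {α : Type*} (c : Bool) : List α → List Bool → List α
  | x :: s, b :: w => if b = c then x :: sel c s w else sel c s w
  | _, _ => []

def lead : List Bool → ℕ
  | true :: w => lead w + 1
  | _ => 0

def lo : List Bool → ℕ
  | [] => 0
  | true :: w => lead w + 1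
  | false :: w => lo w

def isRL : List Bool → Bool
  | [] => true
  | true :: w => w.all id
  | false :: w => isRL w

def ga : List Bool → ℕ
  | [] => 1
  | true :: w => ga w
  | false :: w => if isRL w then catalan (w.count false + 1) else ga w

lemma sel_sublist {α : Type*} (c : Bool) (s : List α) (w : List Bool) :
    (sel c s w).Sublist s := by
  induction s generalizing w with
  | nil => simp [sel]
  | cons x s ih =>
    rcases w with _ | ⟨b, w⟩
    · simp [sel]
    · by_cases h : b = c
      · simp [sel, h, ih]
      · simp [sel, h]; exact (ih w).cons _

lemma sel_length {α : Type*} (c : Bool) (s : List α) (w : List Bool) (h : w.length = s.length) :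
    (sel c s w).length = w.count c := by
  induction s generalizing w with
  | nil => simp at h; simp [sel, h]
  | cons x s ih =>
    rcases w with _ | ⟨b, w⟩
    · simp [sel]
    · simp at h
      by_cases hb : b = c
      · simp [sel, hb, ih w h]
      · simp [sel, hb, ih w h]

lemma lead_spec {α : Type*} [LinearOrder α] (s : List α) (w : List Bool)
    (hs : s.Pairwise (· < ·)) (hw : w.length = s.length) :
    ∃ s1 s2, sel true s w = s1 ++ s2 ∧ s1.length = lead w ∧
      (∀ x ∈ s1, ∀ b ∈ sel false s w, x < b) ∧ (∀ y ∈ s2, ∃ b ∈ sel false s w, b < y) := by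
  induction s generalizing w with
  | nil => simp at hw; subst hw; exact ⟨[], [], by simp [sel, lead]⟩
  | cons x s ih =>
    rcases w with _ | ⟨b, w⟩
    · simp at hw
    · rw [List.pairwise_cons] at hs
      simp at hw
      cases b
      · refine ⟨[], sel true s w, by simp [sel], by simp [lead], by simp, ?_⟩
        intro y hy
        exact ⟨x, by simp [sel], hs.1 y ((sel_sublist _ _ _).subset hy)⟩
      · obtain ⟨s1, s2, h1, h2, h3, h4⟩ := ih w hs.2 hw
        refine ⟨x :: s1, s2, by simp [sel, h1], by simp [lead, h2], ?_, ?_⟩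
        · intro y hy b hb
          simp only [sel, Bool.true_eq_false, if_false] at hb
          rcases List.mem_cons.1 hy with rfl | hy
          · exact hs.1 b ((sel_sublist _ _ _).subset hb)
          · exact h3 y hy b hb
        · simpa [sel] using h4

lemma lo_spec {α : Type*} [LinearOrder α] (s : List α) (w : List Bool)
    (hs : s.Pairwise (· < ·)) (hw : w.length = s.length) :
    ∃ s1 s2, sel true s w = s1 ++ s2 ∧ s1.length = lo w ∧
      (∀ x ∈ s1, ∀ y ∈ s1, ∀ b ∈ sel false s w, ¬ (x < b ∧ b < y)) ∧
      (∀ y ∈ s2, ∃ x ∈ s1, ∃ b ∈ sel false s w, x < b ∧ b < y) := by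
  induction s generalizing w with
  | nil => simp at hw; subst hw; exact ⟨[], [], by simp [sel, lo]⟩
  | cons x s ih =>
    rcases w with _ | ⟨b, w⟩
    · simp at hw
    · rw [List.pairwise_cons] at hs
      simp at hw
      cases b
      · obtain ⟨s1, s2, h1, h2, h3, h4⟩ := ih w hs.2 hw
        refine ⟨s1, s2, by simp [sel, h1], by simp [lo, h2], ?_, ?_⟩
        · intro y hy z hz b hb
          simp only [sel, if_true] at hb
          rcases List.mem_cons.1 hb with rfl | hb
          · have : y ∈ sel true s w := by simp [h1, hy]
            have := hs.1 y ((sel_sublist _ _ _).subset this)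
            exact fun h => absurd h.1 this.not_gt
          · exact h3 y hy z hz b hb
        · intro y hy
          obtain ⟨z, hz, b, hb, h5⟩ := h4 y hy
          exact ⟨z, hz, b, by simp [sel, hb], h5⟩
      · obtain ⟨s1, s2, h1, h2, h3, h4⟩ := lead_spec s w hs.2 hw
        refine ⟨x :: s1, s2, by simp [sel, h1], by simp [lo, h2], ?_, ?_⟩
        · intro y hy z hz b hb h
          simp only [sel, Bool.true_eq_false, if_false] at hb
          rcases List.mem_cons.1 hz with rfl | hz
          · exact absurd h.2 (hs.1 b ((sel_sublist _ _ _).subset hb)).not_gt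
          · exact absurd h.2 (h3 z hz b hb).not_gt
        · intro y hy
          obtain ⟨b, hb, h5⟩ := h4 y hy
          exact ⟨x, by simp, b, by simp [sel, hb],
            hs.1 b ((sel_sublist _ _ _).subset hb), h5⟩

lemma FF_sel {α : Type*} [LinearOrder α] (s : List α) (w : List Bool)
    (hs : s.Pairwise (· < ·)) (hw : w.length = s.length) :
    (FF (sel false s w) (sel true s w)).card = catalan (lo w) := by
  obtain ⟨s1, s2, h1, h2, h3, h4⟩ := lo_spec s w hs hw
  rw [h1, FF_card_two _ _ _ _ h3 h4, h2]
  rw [← h1]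
  exact hs.sublist (sel_sublist _ _ _)

lemma all_sel {α : Type*} (s : List α) (w : List Bool) (hw : w.length = s.length) :
    w.all id = true ↔ sel false s w = [] := by
  induction s generalizing w with
  | nil => simp at hw; simp [sel, hw]
  | cons x s ih =>
    rcases w with _ | ⟨b, w⟩
    · simp at hw
    · simp at hw
      cases b
      · simp [sel]
      · simpa [sel] using ih w hw

lemma isRL_spec {α : Type*} [LinearOrder α] (s : List α) (w : List Bool)
    (hs : s.Pairwise (· < ·)) (hw : w.length = s.length) :
    isRL w = true ↔ ∀ a ∈ sel true s w, ∀ y ∈ sel false s w, ¬ a < y := by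
  induction s generalizing w with
  | nil => simp at hw; simp [sel, hw, isRL]
  | cons x s ih =>
    rcases w with _ | ⟨b, w⟩
    · simp at hw
    · rw [List.pairwise_cons] at hs
      simp at hw
      cases b
      · simp only [isRL, ih w hs.2 hw, sel]
        simp only [Bool.false_eq_true, if_false, if_true, List.mem_cons, forall_eq_or_imp]
        constructor
        · intro h a ha
          exact ⟨(hs.1 a ((sel_sublist _ _ _).subset ha)).not_gt, h a ha⟩
        · intro h a ha; exact (h a ha).2
      · simp only [isRL, all_sel s w hw, sel]
        simp only [Bool.true_eq_false, if_false, if_true, List.mem_cons, forall_eq_or_imp]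
        constructor
        · intro h; simp [h]
        · intro h
          rw [List.eq_nil_iff_forall_not_mem]
          intro y hy
          exact h.1 y hy (hs.1 y ((sel_sublist _ _ _).subset hy))

lemma GG_cons {α : Type*} [LinearOrder α] (A t : List α) (x : α) (h : ∀ y ∈ t, x < y) :
    GG (x :: A) t = GG A t := by
  ext R
  rw [mem_GG, mem_GG]
  refine and_congr_right fun hp => and_congr_left fun _ => ?_
  refine List.Pairwise.iff_of_mem fun {c d} hc hd => ?_
  rw [List.forall_mem_cons]
  have := h c (hp.mem_iff.1 hc)
  exact ⟨fun h => h.2, fun h => ⟨fun h' => absurd h'.1 this.not_gt, h⟩⟩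

lemma GG_sel {α : Type*} [LinearOrder α] (s : List α) (w : List Bool)
    (hs : s.Pairwise (· < ·)) (hw : w.length = s.length) :
    (GG (sel true s w) (sel false s w)).card = ga w := by
  induction s generalizing w with
  | nil =>
    simp at hw; subst hw
    rw [GG_card_catalan] <;> simp [sel, ga]
  | cons x s ih =>
    rcases w with _ | ⟨b, w⟩
    · simp at hw
    · have hs' := List.pairwise_cons.1 hs
      simp at hw
      cases b
      · have hsub := hs.sublist (sel_sublist false (x :: s) (false :: w))
        simp only [sel, if_true, Bool.false_eq_true, if_false, ga] at hsub ⊢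
        have hR := isRL_spec s w hs'.2 hw
        split_ifs with hRL
        · rw [hR] at hRL
          rw [GG_card_catalan _ _ hsub]
          · simp [sel_length _ _ _ hw]
          · intro y hy z hz b hb h
            rcases List.mem_cons.1 hz with rfl | hz
            · exact absurd h.2 (hs'.1 b ((sel_sublist _ _ _).subset hb)).not_gt
            · exact hRL b hb z hz h.2
        · rw [hR] at hRL
          push Not at hRL
          obtain ⟨a, ha, y, hy, hay⟩ := hRL
          rw [GG_card_drop _ _ _ hsub, ih w hs'.2 hw]
          exact ⟨y, hy, a, ha, hs'.1 a ((sel_sublist _ _ _).subset ha), hay⟩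
      · simp only [sel, if_true, Bool.true_eq_false, if_false, ga]
        rw [GG_cons, ih w hs'.2 hw]
        exact fun y hy => hs'.1 y ((sel_sublist _ _ _).subset hy)

def words : ℕ → Finset (List Bool)
  | 0 => {[]}
  | k + 1 => (words k).image (fun w => true :: w) ∪ (words k).image (fun w => false :: w)

lemma mem_words (k : ℕ) (w : List Bool) : w ∈ words k ↔ w.length = k := by
  induction k generalizing w with
  | zero => simp [words]
  | succ k ih =>
    rcases w with _ | ⟨b, w⟩
    · simp [words]
    · cases b <;> simp [words, ih]

lemma sum_words_zero (φ : List Bool → ℤ) : ∑ w ∈ words 0, φ w = φ [] := by simp [words]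

lemma sum_words_succ (k : ℕ) (φ : List Bool → ℤ) :
    ∑ w ∈ words (k + 1), φ w = ∑ w ∈ words k, φ (true :: w) + ∑ w ∈ words k, φ (false :: w) := by
  rw [words, Finset.sum_union, Finset.sum_image, Finset.sum_image]
  · intro a _ b _ h; simpa using h
  · intro a _ b _ h; simpa using h
  · rw [Finset.disjoint_left]
    intro a ha hb
    simp only [Finset.mem_image] at ha hb
    obtain ⟨x, -, rfl⟩ := ha
    obtain ⟨y, -, h⟩ := hb
    simp at h

lemma all_facts (w : List Bool) (h : w.all id = true) :
    ga w = 1 ∧ w.count false = 0 ∧ lead w = w.count true ∧ isRL w = true := by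
  induction w with
  | nil => simp [ga, lead, isRL]
  | cons b w ih =>
    simp only [List.all_cons, Bool.and_eq_true, id] at h
    obtain ⟨rfl, h⟩ := h
    obtain ⟨h1, h2, h3, h4⟩ := ih h
    refine ⟨by simp [ga, h1], by simp [h2], by simp [lead, h3], by simpa [isRL] using h⟩

lemma isRL_facts (w : List Bool) (h : isRL w = true) :
    ga w = catalan (w.count false) ∧ lo w = w.count true := by
  induction w with
  | nil => simp [ga, lo]
  | cons b w ih =>
    cases b
    · simp only [isRL] at h
      simp [ga, h, lo, ih h]
    · simp only [isRL] at h
      obtain ⟨h1, h2, h3, h4⟩ := all_facts w h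
      simp [ga, lo, h1, h2, h3]

lemma sum_all (m : ℕ) (x : ℤ) : ∑ w ∈ words m, (if w.all id = true then x else 0) = x := by
  induction m with
  | zero => simp [sum_words_zero]
  | succ m ih =>
    rw [sum_words_succ]
    simpa using ih

lemma sum_isRL (m : ℕ) (φ : ℕ → ℤ) :
    ∑ w ∈ words m, (if isRL w = true then φ (w.count false) else 0) =
      ∑ a ∈ Finset.range (m + 1), φ a := by
  induction m generalizing φ with
  | zero => simp [sum_words_zero, isRL]
  | succ m ih =>
    rw [sum_words_succ, Finset.sum_range_succ', add_comm]
    congr 1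
    · rw [← ih (fun a => φ (a + 1))]
      simp [isRL]
    · rw [← sum_all m (φ 0)]
      refine Finset.sum_congr rfl fun w _ => ?_
      by_cases h : w.all id = true
      · rw [if_pos h, if_pos (by simpa only [isRL] using h), List.count_cons_of_ne (by simp),
          (all_facts w h).2.1]
      · rw [if_neg h, if_neg (by simpa only [isRL] using h)]

def cc (k : ℕ) : ℤ := catalan k

def sT (m : ℕ) : ℤ := ∑ w ∈ words m, if isRL w = true then 0 else cc (lo w) * ga w
def sU (j m : ℕ) : ℤ := ∑ w ∈ words m, if w.all id = true then 0 else cc (j + lead w) * ga w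
def sQ (m : ℕ) : ℤ := ∑ w ∈ words m, if isRL w = true then 0 else (ga w : ℤ)
def sz (m : ℕ) : ℤ := ∑ w ∈ words m, (ga (false :: w) : ℤ)

lemma sT_succ (m : ℕ) : sT (m + 1) = sU 1 m + sT m := by
  simp only [sT, sU, sum_words_succ]
  congr 1
  · refine Finset.sum_congr rfl fun w _ => ?_
    rw [add_comm 1]
    rfl
  · refine Finset.sum_congr rfl fun w _ => ?_
    by_cases h : isRL w = true
    · rw [if_pos h, if_pos (by simpa only [isRL] using h)]
    · rw [if_neg h, if_neg (by simpa only [isRL] using h)]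
      simp [ga, lo, h]

lemma sU_succ (j m : ℕ) : sU j (m + 1) = sU (j + 1) m + cc j * sz m := by
  simp only [sU, sz, sum_words_succ, Finset.mul_sum]
  congr 1
  · refine Finset.sum_congr rfl fun w _ => ?_
    simp [lead, ga, add_assoc, add_comm 1]

lemma sz_eq (m : ℕ) : sz m = ∑ a ∈ Finset.range (m + 1), cc (a + 1) + sQ m := by
  rw [sz, sQ, ← sum_isRL m (fun a => cc (a + 1)), ← Finset.sum_add_distrib]
  refine Finset.sum_congr rfl fun w _ => ?_
  simp only [ga]
  split_ifs <;> simp [cc]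

lemma sQ_succ (m : ℕ) :
    sQ (m + 1) = 2 * sQ m + ∑ a ∈ Finset.range (m + 1), cc a - 1 := by
  have h : ∑ w ∈ words m, (if w.all id = true then 0 else (ga w : ℤ)) =
      sQ m + ∑ a ∈ Finset.range (m + 1), cc a - 1 := by
    rw [sQ, ← sum_isRL m cc]
    conv_rhs => rw [← sum_all m 1]
    rw [← Finset.sum_add_distrib, ← Finset.sum_sub_distrib]
    refine Finset.sum_congr rfl fun w _ => ?_
    by_cases h : w.all id = true
    · have := all_facts w h
      simp only [h, this.2.2.2, this.2.1, if_true]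
      simp [cc]
    · by_cases h' : isRL w = true
      · simp [h, h', (isRL_facts w h').1, cc]
      · simp [h, h']
  rw [sQ, sum_words_succ]
  have h0 : ∑ w ∈ words m, (if isRL (true :: w) = true then 0 else (ga (true :: w) : ℤ)) =
      ∑ w ∈ words m, (if w.all id = true then 0 else (ga w : ℤ)) := rfl
  rw [h0, h]
  have : ∑ w ∈ words m, (if isRL (false :: w) = true then 0 else
      (ga (false :: w) : ℤ)) = sQ m := by
    rw [sQ]
    refine Finset.sum_congr rfl fun w _ => ?_
    by_cases h : isRL w = true
    · rw [if_pos h, if_pos (by simpa only [isRL] using h)]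
    · rw [if_neg h, if_neg (by simpa only [isRL] using h)]
      simp [ga, h]
  rw [this]; ring

lemma sz_zero : sz 0 = 1 := by simp [sz, sum_words_zero, ga, isRL]

lemma sz_succ (m : ℕ) : sz (m + 1) = 2 * sz m + cc (m + 2) - cc (m + 1) := by
  rw [sz_eq, sz_eq, sQ_succ, Finset.sum_range_succ _ (m + 1), Finset.sum_range_succ' cc m,
    Finset.sum_range_succ _ m]
  simp [cc]; ring

lemma sU_eq (j m : ℕ) :
    sU j (m + 1) = ∑ p ∈ Finset.HasAntidiagonal.antidiagonal m, cc (j + p.1) * sz p.2 := by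
  induction m generalizing j with
  | zero => rw [sU_succ]; simp [sU, sum_words_zero]
  | succ m ih =>
    rw [sU_succ, ih, Finset.Nat.sum_antidiagonal_succ, add_comm]
    simp [add_assoc, add_comm 1]

lemma cc_succ (m : ℕ) : cc (m + 1) = ∑ p ∈ Finset.HasAntidiagonal.antidiagonal m, cc p.1 * cc p.2 := by
  simp [cc, catalan_succ']

lemma conv1 (m : ℕ) : ∑ p ∈ Finset.HasAntidiagonal.antidiagonal m, cc (1 + p.1) * cc (p.2 + 1) =
    cc (m + 3) - 2 * cc (m + 2) := by
  rw [cc_succ (m + 2), Finset.Nat.sum_antidiagonal_succ, Finset.Nat.sum_antidiagonal_succ']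
  simp [cc, add_comm 1]; ring

lemma conv2 (m : ℕ) : ∑ p ∈ Finset.HasAntidiagonal.antidiagonal m, cc (1 + p.1) * cc (p.2 + 2) =
    cc (m + 4) - 2 * cc (m + 3) - cc (m + 2) := by
  have := conv1 (m + 1)
  rw [Finset.Nat.sum_antidiagonal_succ'] at this
  simp only [add_assoc] at this
  norm_num at this
  have h1 : cc 1 = 1 := by simp [cc]
  rw [h1, show 1 + (m + 1) = m + 2 by ring] at this
  linarith

lemma sU_closed (m : ℕ) : sU 1 m = cc (m + 2) - cc (m + 1) - 2 ^ m := by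
  have h1 : cc 1 = 1 := by simp [cc]
  have h2 : cc 2 = 2 := by simp [cc, catalan_two]
  have h3 : cc 3 = 5 := by simp [cc, catalan_three]
  induction m with
  | zero => simp [sU, sum_words_zero, h1, h2]
  | succ m ih =>
    rcases m with _ | m
    · rw [sU_eq]; simp [h1, h2, h3, sz_zero]
    · rw [sU_eq, Finset.Nat.sum_antidiagonal_succ']
      rw [sU_eq] at ih
      simp only [sz_succ, sz_zero]
      have : ∀ p : ℕ × ℕ, cc (1 + p.1) * (2 * sz p.2 + cc (p.2 + 2) - cc (p.2 + 1)) =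
        2 * (cc (1 + p.1) * sz p.2) + cc (1 + p.1) * cc (p.2 + 2)
          - cc (1 + p.1) * cc (p.2 + 1) := fun p => by ring
      simp only [this, Finset.sum_sub_distrib, Finset.sum_add_distrib, ← Finset.mul_sum]
      rw [ih, conv1, conv2, show 1 + (m + 1) = m + 2 by ring]
      ring_nf

lemma sT_closed (m : ℕ) : sT m = cc (m + 1) - 2 ^ m := by
  induction m with
  | zero => simp [sT, sum_words_zero, isRL, cc]
  | succ m ih => rw [sT_succ, ih, sU_closed]; ring

lemma total_sum (m : ℕ) :
    ∑ w ∈ words m, (cc (lo w) * ga w) = 2 * cc (m + 1) - 2 ^ m := by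
  have h : ∑ w ∈ words m, (cc (lo w) * ga w) =
      ∑ w ∈ words m, (if isRL w = true then
        (fun a => cc a * cc (m - a)) (w.count false) else 0) + sT m := by
    rw [sT, ← Finset.sum_add_distrib]
    refine Finset.sum_congr rfl fun w hw => ?_
    split_ifs with h
    · have hlen := (mem_words _ _).1 hw
      have hc : w.count true + w.count false = m := by
        rw [← hlen]; simp
      obtain ⟨h1, h2⟩ := isRL_facts w h
      simp only []
      rw [h1, h2, show m - w.count false = w.count true by omega]
      simp [cc]; ring
    · simp
  rw [h, sum_isRL m (fun a => cc a * cc (m - a)), sT_closed, cc_succ,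
    Finset.Nat.sum_antidiagonal_eq_sum_range_succ (fun i j => cc i * cc j)]
  ring

lemma total_sum_nat (m : ℕ) :
    ∑ w ∈ words m, (catalan (lo w) * ga w) = 2 * catalan (m + 1) - 2 ^ m := by
  have := total_sum m
  simp only [cc] at this
  have h2 : ((∑ w ∈ words m, (catalan (lo w) * ga w) : ℕ) : ℤ) =
      2 * (catalan (m + 1) : ℤ) - 2 ^ m := by push_cast; exact this
  have h3 : ((2 ^ m : ℕ) : ℤ) = 2 ^ m := by push_cast; rfl
  rw [← h3] at h2
  generalize ∑ w ∈ words m, (catalan (lo w) * ga w) = S at *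
  generalize 2 ^ m = x at *
  omega

lemma sel_perm {α : Type*} (s : List α) (w : List Bool) (hw : w.length = s.length) :
    (sel true s w ++ sel false s w).Perm s := by
  induction s generalizing w with
  | nil => simp [sel]
  | cons x s ih =>
    rcases w with _ | ⟨b, w⟩
    · simp at hw
    · simp at hw
      cases b
      · simp only [sel, if_true, Bool.false_eq_true, if_false]
        exact List.perm_middle.trans ((ih w hw).cons x)
      · simp only [sel, if_true, Bool.true_eq_false, if_false]
        exact (ih w hw).cons x

lemma sel_map {α : Type*} (c : Bool) (s : List α) (p : α → Bool) :
    sel c s (s.map p) = s.filter (fun x => p x = c) := by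
  induction s with
  | nil => simp [sel]
  | cons x s ih =>
    by_cases h : p x = c
    · simp [sel, h, ih]
    · simp [sel, h, ih]

lemma word_eq {α : Type*} [DecidableEq α] (s : List α) (w : List Bool) (hs : s.Nodup)
    (hw : w.length = s.length) : w = s.map (fun x => decide (x ∈ sel true s w)) := by
  induction s generalizing w with
  | nil => simpa using hw
  | cons x s ih =>
    rcases w with _ | ⟨b, w⟩
    · simp at hw
    · simp at hw
      rw [List.nodup_cons] at hs
      have hx : x ∉ sel true s w := fun h => hs.1 ((sel_sublist _ _ _).subset h)
      have := ih w hs.2 hw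
      cases b
      · simp only [sel, Bool.false_eq_true, if_false, List.map_cons, hx, decide_false]
        rw [← this]
      · simp only [sel, if_true, List.map_cons, List.mem_cons, true_or, decide_true]
        congr 1
        refine this.trans ?_
        refine List.map_congr_left fun y hy => ?_
        have : y ≠ x := fun h => hs.1 (h ▸ hy)
        simp [this]

lemma PF_congr {α : Type*} [LinearOrder α] {B B' : List α} (h : ∀ x, x ∈ B ↔ x ∈ B')
    (L : List α) : PF B L ↔ PF B' L := by
  simp only [PF, h]

lemma PG_congr {α : Type*} [LinearOrder α] {B B' : List α} (h : ∀ x, x ∈ B ↔ x ∈ B')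
    (L : List α) : PG B L ↔ PG B' L := by
  simp only [PG, h]

/-- Pairs (left part, right part) of valid partial permutations. -/
noncomputable def YY (m : ℕ) : Finset (List (Fin m) × List (Fin m)) :=
  (words m).biUnion (fun w =>
    FF (sel false (List.finRange m) w) (sel true (List.finRange m) w) ×ˢ
      GG (sel true (List.finRange m) w) (sel false (List.finRange m) w))

lemma YY_card (m : ℕ) : (YY m).card = 2 * catalan (m + 1) - 2 ^ m := by
  have hs : (List.finRange m).Pairwise (· < ·) := List.pairwise_lt_finRange m
  rw [YY, Finset.card_biUnion, ← total_sum_nat]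
  · refine Finset.sum_congr rfl fun w hw => ?_
    have hw : w.length = (List.finRange m).length := by simpa [mem_words] using hw
    rw [Finset.card_product, FF_sel _ _ hs hw, GG_sel _ _ hs hw]
  · intro w hw w' hw' hne
    have hw : w.length = (List.finRange m).length := by simpa [mem_words] using hw
    have hw' : w'.length = (List.finRange m).length := by simpa [mem_words] using hw'
    rw [Function.onFun, Finset.disjoint_left]
    intro p hp hp'
    apply hne
    rw [Finset.mem_product] at hp hp'
    have h1 := ((mem_FF _ _ _).1 hp.1).1
    have h2 := ((mem_FF _ _ _).1 hp'.1).1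
    rw [word_eq _ w (List.nodup_finRange m) hw, word_eq _ w' (List.nodup_finRange m) hw']
    refine List.map_congr_left fun y _ => ?_
    simp [← h1.mem_iff, ← h2.mem_iff]

lemma mem_YY (m : ℕ) (L R : List (Fin m)) :
    (L, R) ∈ YY m ↔ (L ++ R).Perm (List.finRange m) ∧ PF R L ∧ PG L R := by
  rw [YY, Finset.mem_biUnion]
  constructor
  · rintro ⟨w, hw, h⟩
    have hw : w.length = (List.finRange m).length := by simpa [mem_words] using hw
    rw [Finset.mem_product, mem_FF, mem_GG] at h
    obtain ⟨⟨h1, h2⟩, h3, h4⟩ := h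
    refine ⟨(h1.append h3).trans (sel_perm _ _ hw), ?_, ?_⟩
    · exact (PF_congr (fun x => h3.mem_iff) _).2 h2
    · exact (PG_congr (fun x => h1.mem_iff) _).2 h4
  · rintro ⟨h, h2, h4⟩
    have hnd : (L ++ R).Nodup := h.nodup_iff.2 (List.nodup_finRange m)
    have hmem : ∀ x, x ∈ L ∨ x ∈ R := fun x => by
      have : x ∈ L ++ R := h.mem_iff.2 (List.mem_finRange x)
      simpa using this
    rw [List.nodup_append] at hnd
    obtain ⟨n1, n2, n3⟩ := hnd
    have h1 : L.Perm (sel true (List.finRange m)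
        ((List.finRange m).map (fun x => decide (x ∈ L)))) := by
      rw [sel_map, List.perm_ext_iff_of_nodup n1 ((List.nodup_finRange m).filter _)]
      intro x; simp
    have h3 : R.Perm (sel false (List.finRange m)
        ((List.finRange m).map (fun x => decide (x ∈ L)))) := by
      rw [sel_map, List.perm_ext_iff_of_nodup n2 ((List.nodup_finRange m).filter _)]
      intro x
      simp only [List.mem_filter, List.mem_finRange, true_and, decide_eq_true_eq,
        decide_eq_false_iff_not]
      constructor
      · intro hx hx'; exact n3 x hx' x hx rfl
      · intro hx; exact (hmem x).resolve_left hx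
    refine ⟨(List.finRange m).map (fun x => decide (x ∈ L)), by simp [mem_words], ?_⟩
    rw [Finset.mem_product, mem_FF, mem_GG]
    exact ⟨⟨h1, (PF_congr (fun x => h3.mem_iff) _).1 h2⟩,
      h3, (PG_congr (fun x => h1.mem_iff) _).1 h4⟩

/-- The word of a partial permutation with left part and right part given. -/
def toW {m : ℕ} (p : List (Fin m) × List (Fin m)) : List (Option (Fin m)) :=
  p.1.map some ++ none :: p.2.map some

lemma toW_inj {m : ℕ} : Function.Injective (toW (m := m)) := by
  rintro ⟨L, R⟩ ⟨L', R'⟩ h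
  simp only [toW] at h
  rw [List.append_cons_inj_of_notMem (by simp) (by simp)] at h
  obtain ⟨h1, -, h2⟩ := h
  have hi : Function.Injective (some : Fin m → Option (Fin m)) := Option.some_injective _
  rw [(List.map_injective_iff.2 hi) h1, (List.map_injective_iff.2 hi) h2]

lemma exists_map_some {α : Type*} (l : List (Option α)) (h : none ∉ l) :
    ∃ L : List α, l = L.map some := by
  induction l with
  | nil => exact ⟨[], rfl⟩
  | cons x l ih =>
    rw [List.mem_cons, not_or] at h
    obtain ⟨L, rfl⟩ := ih h.2
    rcases x with _ | x
    · exact absurd rfl h.1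
    · exact ⟨x :: L, rfl⟩

lemma isPPerm_iff {m : ℕ} (π : Fin (m + 1) → Option (Fin m)) :
    IsPPerm (n := m + 1) 1 π ↔ Function.Bijective π := by
  constructor
  · rintro ⟨h1, h2⟩
    obtain ⟨h, hh⟩ := Finset.card_eq_one.1 h1
    have hh' : ∀ i, π i = none ↔ i = h := fun i => by
      have : i ∈ (Finset.univ.filter fun i => π i = none) ↔ i ∈ ({h} : Finset _) := by rw [hh]
      simpa using this
    constructor
    · intro i j hij
      rcases hi : π i with _ | v
      · rw [(hh' i).1 hi, (hh' j).1 (hij ▸ hi)]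
      · exact (h2 v).unique hi (hij ▸ hi)
    · intro v
      rcases v with _ | v
      · exact ⟨h, (hh' h).2 rfl⟩
      · exact (h2 v).exists
  · intro hb
    refine ⟨?_, fun v => hb.existsUnique (some v)⟩
    rw [Finset.card_eq_one]
    obtain ⟨h, hh, hu⟩ := hb.existsUnique none
    refine ⟨h, ?_⟩
    ext i
    simp only [Finset.mem_filter, Finset.mem_univ, true_and, Finset.mem_singleton]
    exact ⟨hu i, fun e => e ▸ hh⟩

lemma bij_iff_perm {m : ℕ} (π : Fin (m + 1) → Option (Fin m)) (L R : List (Fin m))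
    (h : List.ofFn π = toW (L, R)) :
    Function.Bijective π ↔ (L ++ R).Perm (List.finRange m) := by
  have hlen := congrArg List.length h
  simp [toW] at hlen
  have h1 : Function.Bijective π ↔ (L ++ R).Nodup := by
    rw [Fintype.bijective_iff_injective_and_card, ← List.nodup_ofFn, h, toW,
      List.nodup_middle, List.nodup_cons, ← List.map_append,
      List.nodup_map_iff (Option.some_injective _)]
    simp
  rw [h1]
  constructor
  · intro hn
    refine (List.subperm_of_subset hn (fun x _ => List.mem_finRange x)).perm_of_length_le ?_
    simp; omega
  · intro hp
    exact hp.nodup_iff.2 (List.nodup_finRange m)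

lemma exists_split {m : ℕ} (π : Fin (m + 1) → Option (Fin m)) (hb : Function.Bijective π) :
    ∃ L R, List.ofFn π = toW (L, R) := by
  obtain ⟨h, hh⟩ := hb.2 none
  have hm : none ∈ List.ofFn π := by rw [List.mem_ofFn]; exact ⟨h, hh⟩
  obtain ⟨l1, l2, he⟩ := List.append_of_mem hm
  have hn : (List.ofFn π).Nodup := List.nodup_ofFn.2 hb.1
  rw [he, List.nodup_middle, List.nodup_cons, List.mem_append, not_or] at hn
  obtain ⟨L, rfl⟩ := exists_map_some l1 hn.1.1
  obtain ⟨R, rfl⟩ := exists_map_some l2 hn.1.2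
  exact ⟨L, R, he⟩

lemma exists_fn {m : ℕ} (L R : List (Fin m)) (h : (L ++ R).Perm (List.finRange m)) :
    ∃ π : Fin (m + 1) → Option (Fin m), List.ofFn π = toW (L, R) := by
  have hlen : (toW (L, R)).length = m + 1 := by
    have := h.length_eq
    simp at this
    simp [toW]; omega
  refine ⟨fun i => (toW (L, R))[i], ?_⟩
  apply List.ext_getElem
  · simp [hlen]
  · intro i h1 h2; rw [List.getElem_ofFn]; rfl

/-- The avoidance conditions in terms of positions, for the hole at `h`. -/
def QQ {m : ℕ} (π : Fin (m + 1) → Option (Fin m)) (h : Fin (m + 1)) : Prop :=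
  ∀ i j k a b c, π i = some a → π j = some b → π k = some c → i < j →
    (j < h → h < k → ¬ (a < c ∧ c < b)) ∧
    (i < h → h < j → j < k → ¬ (b < a ∧ a < c)) ∧
    (j < k → k < h → ¬ (c < a ∧ a < b)) ∧
    (h < i → j < k → ¬ (b < c ∧ c < a))

lemma sa_val {m : ℕ} (t : Fin (m + 1)) (v : Fin m) :
    ((t.succAbove v : Fin (m + 1)) : ℕ) = if (v : ℕ) < t then (v : ℕ) else v + 1 := by
  rw [Fin.succAbove]
  simp only [Fin.lt_def, Fin.val_castSucc]
  split_ifs <;> simp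

lemma no_pat {m : ℕ} {π : Fin (m + 1) → Option (Fin m)} (hb : Function.Bijective π)
    (hav : PPAvoids π (![1, 3, 0, 2] : Fin 4 → Fin 4)) (t : Fin (m + 1))
    (g0 g1 g2 g3 : Fin (m + 1)) (h01 : g0 < g1) (h12 : g1 < g2) (h23 : g2 < g3) :
    let σ : Fin (m + 1) → Fin (m + 1) := fun i => (π i).elim t t.succAbove
    ¬ (σ g2 < σ g0 ∧ σ g0 < σ g3 ∧ σ g3 < σ g1) := by
  intro σ
  rintro ⟨a1, a2, a3⟩
  have hinj : Function.Injective σ := by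
    intro i j hij
    apply hb.1
    simp only [σ] at hij
    rcases hi : π i with _ | v <;> rcases hj : π j with _ | u <;>
      simp only [hi, hj, Option.elim] at hij
    · rfl
    · exact absurd hij (Fin.succAbove_ne t u).symm
    · exact absurd hij (Fin.succAbove_ne t v)
    · rw [Fin.succAbove_right_injective hij]
  have hσ : Function.Bijective σ := Finite.injective_iff_bijective.1 hinj
  refine hav (Equiv.ofBijective σ hσ) ?_ ⟨![g0, g1, g2, g3], ?_, ?_⟩
  · intro i j vi vj hi hj
    simp only [Equiv.ofBijective_apply, σ, hi, hj, Option.elim]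
    exact Fin.succAbove_lt_succAbove_iff
  · rw [Fin.strictMono_iff_lt_succ]
    intro i
    fin_cases i
    · exact h01
    · exact h12
    · exact h23
  · intro a b
    simp only [Equiv.ofBijective_apply]
    clear_value σ
    fin_cases a <;> fin_cases b <;> simp <;> order

lemma avoid_iff {m : ℕ} (π : Fin (m + 1) → Option (Fin m)) (hb : Function.Bijective π)
    (h : Fin (m + 1)) (hh : π h = none) :
    PPAvoids π (![1, 3, 0, 2] : Fin 4 → Fin 4) ↔ QQ π h := by
  constructor
  · intro hav i j k a b c hi hj hk hij
    refine ⟨?_, ?_, ?_, ?_⟩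
    · rintro h1 h2 ⟨h3, h4⟩
      have := no_pat hb hav 0 i j h k hij h1 h2
      simp only [hi, hj, hk, hh, Option.elim, Fin.lt_def, sa_val] at this h3 h4
      apply this
      refine ⟨?_, ?_, ?_⟩ <;> simp <;> omega
    · rintro h1 h2 h3 ⟨h4, h5⟩
      have := no_pat hb hav (Fin.last m) i h j k h1 h2 h3
      simp only [hi, hj, hk, hh, Option.elim, Fin.lt_def, sa_val] at this h4 h5
      apply this
      refine ⟨?_, ?_, ?_⟩ <;> simp <;> omega
    · rintro h1 h2 ⟨h4, h5⟩
      have := no_pat hb hav a.succ i j k h hij h1 h2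
      simp only [hi, hj, hk, hh, Option.elim, Fin.lt_def, sa_val] at this h4 h5
      apply this
      simp only [Fin.val_succ]
      refine ⟨?_, ?_, ?_⟩ <;> split_ifs <;> omega
    · rintro h1 h2 ⟨h4, h5⟩
      have := no_pat hb hav b.succ h i j k h1 hij h2
      simp only [hi, hj, hk, hh, Option.elim, Fin.lt_def, sa_val] at this h4 h5
      apply this
      simp only [Fin.val_succ]
      refine ⟨?_, ?_, ?_⟩ <;> split_ifs <;> omega
  · rintro hQ σ hσ ⟨g, hg, hp⟩
    have hs : ∀ i, i ≠ h → ∃ v, π i = some v := by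
      intro i hi
      rcases hv : π i with _ | v
      · exact absurd (hb.1 (hv.trans hh.symm)) hi
      · exact ⟨v, rfl⟩
    have l01 : g 0 < g 1 := hg (by decide)
    have l12 : g 1 < g 2 := hg (by decide)
    have l23 : g 2 < g 3 := hg (by decide)
    have p20 : σ (g 2) < σ (g 0) := (hp 2 0).2 (by decide)
    have p03 : σ (g 0) < σ (g 3) := (hp 0 3).2 (by decide)
    have p31 : σ (g 3) < σ (g 1) := (hp 3 1).2 (by decide)
    rcases lt_or_ge h (g 1) with c1 | c1
    · obtain ⟨v1, e1⟩ := hs (g 1) (by order)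
      obtain ⟨v2, e2⟩ := hs (g 2) (by order)
      obtain ⟨v3, e3⟩ := hs (g 3) (by order)
      exact (hQ _ _ _ _ _ _ e1 e2 e3 l12).2.2.2 c1 l23
        ⟨(hσ _ _ _ _ e2 e3).1 (by order), (hσ _ _ _ _ e3 e1).1 (by order)⟩
    · rcases lt_trichotomy h (g 2) with c2 | c2 | c2
      · obtain ⟨v0, e0⟩ := hs (g 0) (by order)
        obtain ⟨v2, e2⟩ := hs (g 2) (by order)
        obtain ⟨v3, e3⟩ := hs (g 3) (by order)
        exact (hQ _ _ _ _ _ _ e0 e2 e3 (by order)).2.1 (by order) c2 l23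
          ⟨(hσ _ _ _ _ e2 e0).1 (by order), (hσ _ _ _ _ e0 e3).1 (by order)⟩
      · obtain ⟨v0, e0⟩ := hs (g 0) (by order)
        obtain ⟨v1, e1⟩ := hs (g 1) (by order)
        obtain ⟨v3, e3⟩ := hs (g 3) (by order)
        exact (hQ _ _ _ _ _ _ e0 e1 e3 l01).1 (by order) (by order)
          ⟨(hσ _ _ _ _ e0 e3).1 (by order), (hσ _ _ _ _ e3 e1).1 (by order)⟩
      · obtain ⟨v0, e0⟩ := hs (g 0) (by order)
        obtain ⟨v1, e1⟩ := hs (g 1) (by order)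
        obtain ⟨v2, e2⟩ := hs (g 2) (by order)
        exact (hQ _ _ _ _ _ _ e0 e1 e2 l01).2.2.1 l12 c2
          ⟨(hσ _ _ _ _ e2 e0).1 (by order), (hσ _ _ _ _ e0 e1).1 (by order)⟩

lemma QQ_iff {m : ℕ} (π : Fin (m + 1) → Option (Fin m)) (L R : List (Fin m))
    (he : List.ofFn π = toW (L, R)) (h : Fin (m + 1)) (hh : (h : ℕ) = L.length) :
    π h = none ∧ (QQ π h ↔ PF R L ∧ PG L R) := by
  have hlen := congrArg List.length he
  simp [toW] at hlen
  have hget : ∀ i : Fin (m + 1), some (π i) = (toW (L, R))[(i : ℕ)]? := by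
    intro i
    rw [← he, List.getElem?_ofFn]; simp; omega
  have hL : ∀ (i : ℕ) (hi : i < L.length), π ⟨i, by omega⟩ = some L[i] := by
    intro i hi
    have := hget ⟨i, by omega⟩
    simpa [toW, hi, List.getElem?_append_left] using this
  have hR : ∀ (i : ℕ) (hi : i < R.length), π ⟨L.length + 1 + i, by omega⟩ = some R[i] := by
    intro i hi
    have := hget ⟨L.length + 1 + i, by omega⟩
    rw [toW, List.getElem?_append_right (by simp; omega)] at this
    simp only [List.length_map] at this
    rw [show L.length + 1 + i - L.length = i + 1 by omega] at this
    simpa [hi] using this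
  have hN : π h = none := by
    have := hget h
    rw [toW, List.getElem?_append_right (by simp [hh])] at this
    simpa [hh] using this
  have hL' : ∀ (i : Fin (m + 1)) a, π i = some a → i < h →
      ∃ hi : (i : ℕ) < L.length, L[(i : ℕ)] = a := by
    intro i a hi hlt
    have hlt : (i : ℕ) < L.length := by rw [← hh]; exact hlt
    refine ⟨hlt, ?_⟩
    have := hL i hlt
    simpa [hi, eq_comm] using this
  have hR' : ∀ (i : Fin (m + 1)) a, π i = some a → h < i →
      ∃ j, ∃ hj : j < R.length, (i : ℕ) = L.length + 1 + j ∧ R[j] = a := by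
    intro i a hi hlt
    have hlt : L.length < (i : ℕ) := by rw [← hh]; exact hlt
    have := i.2
    have hj : (i : ℕ) - L.length - 1 < R.length := by omega
    have hij : (i : ℕ) = L.length + 1 + ((i : ℕ) - L.length - 1) := by omega
    refine ⟨(i : ℕ) - L.length - 1, hj, hij, ?_⟩
    have h2 := hR _ hj
    rw [show (⟨L.length + 1 + ((i : ℕ) - L.length - 1), by omega⟩ : Fin (m + 1)) = i from
      Fin.ext hij.symm, hi] at h2
    exact (Option.some_injective _ h2).symm
  refine ⟨hN, ?_⟩
  simp only [PF, PG, List.pairwise_iff_getElem, List.triplewise_iff_getElem]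
  constructor
  · intro hQ
    refine ⟨⟨?_, ?_⟩, ?_, ?_⟩
    · intro i j hi hj hij d hd
      obtain ⟨k, hk, rfl⟩ := List.mem_iff_getElem.1 hd
      exact (hQ _ _ _ _ _ _ (hL i hi) (hL j hj) (hR k hk) hij).1
        (by rw [Fin.lt_def]; simp only [hh]; omega) (by rw [Fin.lt_def]; simp only [hh]; omega)
    · intro i j k hij hjk hk
      exact (hQ _ _ _ _ _ _ (hL i (by omega)) (hL j (by omega)) (hL k hk) hij).2.2.1 hjk
        (by rw [Fin.lt_def]; simp only [hh]; omega)
    · intro j k hj hk hjk a ha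
      obtain ⟨i, hi, rfl⟩ := List.mem_iff_getElem.1 ha
      exact (hQ _ _ _ _ _ _ (hL i hi) (hR j hj) (hR k hk)
        (by rw [Fin.lt_def]; simp only []; omega)).2.1
        (by rw [Fin.lt_def]; simp only [hh]; omega) (by rw [Fin.lt_def]; simp only [hh]; omega)
        (by rw [Fin.lt_def]; simp only []; omega)
    · intro i j k hij hjk hk
      exact (hQ _ _ _ _ _ _ (hR i (by omega)) (hR j (by omega)) (hR k hk)
        (by rw [Fin.lt_def]; simp only []; omega)).2.2.2
        (by rw [Fin.lt_def]; simp only [hh]; omega) (by rw [Fin.lt_def]; simp only []; omega)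
  · rintro ⟨⟨q1, q3⟩, q2, q4⟩ i j k a b c hi hj hk hij
    refine ⟨?_, ?_, ?_, ?_⟩
    · intro h1 h2
      obtain ⟨i', rfl⟩ := hL' i a hi (by order)
      obtain ⟨j', rfl⟩ := hL' j b hj h1
      obtain ⟨k', hk', -, rfl⟩ := hR' k c hk h2
      exact q1 i j i' j' hij _ (List.getElem_mem _)
    · intro h1 h2 h3
      obtain ⟨i', rfl⟩ := hL' i a hi h1
      obtain ⟨j', hj', ej, rfl⟩ := hR' j b hj h2
      obtain ⟨k', hk', ek, rfl⟩ := hR' k c hk (by order)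
      exact q2 j' k' hj' hk' (by rw [Fin.lt_def] at h3; omega) _ (List.getElem_mem _)
    · intro h1 h2
      obtain ⟨i', rfl⟩ := hL' i a hi (by order)
      obtain ⟨j', rfl⟩ := hL' j b hj (by order)
      obtain ⟨k', rfl⟩ := hL' k c hk h2
      exact q3 i j k hij h1 k'
    · intro h1 h2
      obtain ⟨i', hi', ei, rfl⟩ := hR' i a hi h1
      obtain ⟨j', hj', ej, rfl⟩ := hR' j b hj (by order)
      obtain ⟨k', hk', ek, rfl⟩ := hR' k c hk (by order)
      exact q4 i' j' k' (by rw [Fin.lt_def] at hij; omega) (by rw [Fin.lt_def] at h2; omega) hk'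

lemma valid_iff {m : ℕ} (π : Fin (m + 1) → Option (Fin m)) (L R : List (Fin m))
    (he : List.ofFn π = toW (L, R)) :
    (IsPPerm (n := m + 1) 1 π ∧ PPAvoids π (![1, 3, 0, 2] : Fin 4 → Fin 4)) ↔
      (L, R) ∈ YY m := by
  rw [mem_YY, isPPerm_iff, ← bij_iff_perm π L R he]
  refine and_congr_right fun hb => ?_
  have hlen := congrArg List.length he
  simp [toW] at hlen
  obtain ⟨hN, hQ⟩ := QQ_iff π L R he ⟨L.length, by omega⟩ rfl
  rw [avoid_iff π hb _ hN, hQ]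

lemma count_succ (m : ℕ) :
    snk (m + 1) 1 (![1, 3, 0, 2] : Fin 4 → Fin 4) = 2 * catalan (m + 1) - 2 ^ m := by
  rw [← YY_card, ← Set.ncard_coe_finset, ← Set.ncard_image_of_injective _ (toW_inj (m := m))]
  have : snk (m + 1) 1 (![1, 3, 0, 2] : Fin 4 → Fin 4) =
      Set.ncard {π : Fin (m + 1) → Option (Fin m) |
        IsPPerm (n := m + 1) 1 π ∧ PPAvoids π (![1, 3, 0, 2] : Fin 4 → Fin 4)} := rfl
  rw [this, ← Set.ncard_image_of_injective _
    (List.ofFn_injective : Function.Injective (List.ofFn (n := m + 1) (α := Option (Fin m))))]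
  congr 1
  ext l
  constructor
  · rintro ⟨π, hπ, rfl⟩
    obtain ⟨L, R, he⟩ := exists_split π ((isPPerm_iff π).1 hπ.1)
    exact ⟨(L, R), (valid_iff π L R he).1 hπ, he.symm⟩
  · rintro ⟨⟨L, R⟩, hp, rfl⟩
    obtain ⟨π, he⟩ := exists_fn L R ((mem_YY _ _ _).1 hp).1
    exact ⟨π, (valid_iff π L R he).2 hp, he⟩

/-- `s_n^1(2413) = 2·Catalan(n) - 2^(n-1)` for `n ≥ 1`. -/
theorem count_2413_one_hole (n : ℕ) (hn : 1 ≤ n) :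
    snk n 1 (![1, 3, 0, 2] : Fin 4 → Fin 4) = 2 * catalan n - 2 ^ (n - 1) := by
  obtain ⟨m, rfl⟩ : ∃ m, n = m + 1 := ⟨n - 1, by omega⟩
  exact count_succ m
end

section
/- The patterns 1342 and 2431 are not strongly 1-Wilf equivalent: for H = {2} and n = 5, the number of 1342-avoiding partial permutations of length 5 with hole set H is 13, while the number of 2431-avoiding ones is 14. Nevertheless, 1342 and 2431 are k-Wilf equivalent for every k (a partial permutation avoids 1342 iff its reverse avoids 2431). -/
open Finset

theorem containsPat_rev {n l : ℕ} {α β : Type*} [LinearOrder α] [LinearOrder β]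
    (σ : Fin n → α) (p : Fin l → β) (h : ContainsPat σ p) :
    ContainsPat (fun t => σ t.rev) (fun t => p t.rev) := by
  obtain ⟨g, hg, h⟩ := h
  refine ⟨fun a => (g a.rev).rev, fun a b hab => ?_, fun a b => ?_⟩
  · exact Fin.rev_lt_rev.2 (hg (Fin.rev_lt_rev.2 hab))
  · simpa using h a.rev b.rev

theorem ppAvoids_rev {n l : ℕ} {α β : Type*} [LinearOrder α] [LinearOrder β]
    (π : Fin n → Option α) (p : Fin l → β) (h : PPAvoids π p) :
    PPAvoids (fun t => π t.rev) (fun t => p t.rev) := by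
  intro σ hσ hc
  refine h (Fin.revPerm.trans σ) ?_ ?_
  · intro i j vi vj hi hj
    simpa using hσ i.rev j.rev vi vj (by simpa using hi) (by simpa using hj)
  · have := containsPat_rev _ _ hc
    simp only [Fin.rev_rev] at this
    exact this

theorem pat_rev : (fun t : Fin 4 => (![0, 2, 3, 1] : Fin 4 → Fin 4) t.rev) = ![1, 3, 2, 0] := by
  decide

theorem ppAvoids_rev_iff (n : ℕ) (α : Type) [LinearOrder α] (π : Fin n → Option α) :
      PPAvoids π (![0, 2, 3, 1] : Fin 4 → Fin 4) ↔
        PPAvoids (fun t : Fin n => π t.rev) (![1, 3, 2, 0] : Fin 4 → Fin 4) := by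
  rw [← pat_rev]
  constructor
  · exact ppAvoids_rev _ _
  · intro h
    have := ppAvoids_rev _ _ h
    simpa using this

theorem isPPerm_rev {n k : ℕ} (π : Fin n → Option (Fin (n - k))) (h : IsPPerm k π) :
    IsPPerm k (fun t => π t.rev) := by
  refine ⟨?_, fun v => ?_⟩
  · refine Eq.trans ?_ h.1
    refine Finset.card_bij (fun i _ => i.rev) ?_ ?_ ?_
    · intro a ha
      simpa using ha
    · intro a _ b _ hab
      exact Fin.rev_injective hab
    · intro b hb
      exact ⟨b.rev, by simpa using hb, by simp⟩
  · obtain ⟨i, hi, hu⟩ := h.2 v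
    refine ⟨i.rev, by simpa using hi, fun y hy => ?_⟩
    rw [← hu _ hy, Fin.rev_rev]

theorem isPPerm_rev_iff {n k : ℕ} (π : Fin n → Option (Fin (n - k))) :
    IsPPerm k π ↔ IsPPerm k (fun t => π t.rev) :=
  ⟨isPPerm_rev π, fun h => by simpa using isPPerm_rev _ h⟩

theorem snk_eq (k n : ℕ) : snk n k (![0, 2, 3, 1] : Fin 4 → Fin 4) =
    snk n k (![1, 3, 2, 0] : Fin 4 → Fin 4) := by
  refine Nat.card_congr
    ((Equiv.arrowCongr Fin.revPerm (Equiv.refl (Option (Fin (n - k))))).subtypeEquiv ?_)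
  intro π
  exact and_congr (isPPerm_rev_iff π) (ppAvoids_rev_iff n _ π)

/-- The partial permutation of length 5 with a hole at index 1 given by `τ`. -/
def mkPP (τ : Fin 4 → Fin 4) : Fin 5 → Option (Fin 4) :=
  ![some (τ 0), none, some (τ 1), some (τ 2), some (τ 3)]

/-- The extension of `mkPP τ` taking the value `v` at the hole. -/
def mkExt (τ : Fin 4 → Fin 4) (v : Fin 5) : Fin 5 → Fin 5 :=
  ![v.succAbove (τ 0), v, v.succAbove (τ 1), v.succAbove (τ 2), v.succAbove (τ 3)]

/-- Executable form of avoidance. -/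
def Good (p : Fin 4 → Fin 4) (τ : Fin 4 → Fin 4) : Prop :=
  ∀ v m : Fin 5, ¬ ∀ a b : Fin 4,
    mkExt τ v (m.succAbove a) < mkExt τ v (m.succAbove b) ↔ p a < p b

instance (p τ : Fin 4 → Fin 4) : Decidable (Good p τ) := by
  unfold Good; infer_instance

set_option synthInstance.maxSize 4000 in
set_option synthInstance.maxHeartbeats 400000 in
theorem strictMono_eq (g : Fin 4 → Fin 5) (hg : StrictMono g) :
    ∃ m : Fin 5, ∀ a, g a = m.succAbove a := by
  have key : ∀ a b : Fin 5, a < b → ∀ c, b < c → ∀ d, c < d → ∃ m : Fin 5,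
      a = m.succAbove 0 ∧ b = m.succAbove 1 ∧ c = m.succAbove 2 ∧ d = m.succAbove 3 := by
    decide +kernel
  obtain ⟨m, h0, h1, h2, h3⟩ := key (g 0) (g 1) (hg (by decide)) (g 2) (hg (by decide))
    (g 3) (hg (by decide))
  refine ⟨m, fun a => ?_⟩
  fin_cases a <;> assumption

theorem containsPat_iff (σ : Fin 5 → Fin 5) (p : Fin 4 → Fin 4) :
    ContainsPat σ p ↔ ∃ m : Fin 5, ∀ a b : Fin 4,
      σ (m.succAbove a) < σ (m.succAbove b) ↔ p a < p b := by
  constructor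
  · rintro ⟨g, hg, h⟩
    obtain ⟨m, hm⟩ := strictMono_eq g hg
    exact ⟨m, fun a b => by rw [← hm, ← hm]; exact h a b⟩
  · rintro ⟨m, h⟩
    exact ⟨_, Fin.strictMono_succAbove m, h⟩

theorem mkPP_succAbove (τ : Fin 4 → Fin 4) (a : Fin 4) :
    mkPP τ ((1 : Fin 5).succAbove a) = some (τ a) := by
  fin_cases a <;> rfl

theorem mkExt_succAbove (τ : Fin 4 → Fin 4) (v : Fin 5) (a : Fin 4) :
    mkExt τ v ((1 : Fin 5).succAbove a) = v.succAbove (τ a) := by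
  fin_cases a <;> rfl

theorem mkExt_one (τ : Fin 4 → Fin 4) (v : Fin 5) : mkExt τ v 1 = v := rfl

theorem mkPP_one (τ : Fin 4 → Fin 4) : mkPP τ 1 = none := rfl

theorem eq_one_or (i : Fin 5) : i = 1 ∨ ∃ a : Fin 4, i = (1 : Fin 5).succAbove a := by
  revert i; decide

theorem mkExt_injective (τ : Equiv.Perm (Fin 4)) (v : Fin 5) :
    Function.Injective (mkExt τ v) := by
  intro i j hij
  rcases eq_one_or i with rfl | ⟨a, rfl⟩ <;> rcases eq_one_or j with rfl | ⟨b, rfl⟩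
  · rfl
  · rw [mkExt_one, mkExt_succAbove] at hij
    exact absurd hij.symm (Fin.succAbove_ne _ _)
  · rw [mkExt_one, mkExt_succAbove] at hij
    exact absurd hij (Fin.succAbove_ne _ _)
  · rw [mkExt_succAbove, mkExt_succAbove] at hij
    rw [τ.injective (Fin.succAbove_right_injective hij)]

theorem isExtension_iff (τ : Equiv.Perm (Fin 4)) (σ : Equiv.Perm (Fin 5)) :
    IsExtension σ (mkPP τ) ↔ ∃ v, ⇑σ = mkExt τ v := by
  constructor
  · intro h
    obtain ⟨v, hv⟩ := strictMono_eq (fun a => σ ((1 : Fin 5).succAbove (τ.symm a)))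
      (by
        intro a b hab
        refine (h _ _ _ _ (mkPP_succAbove τ _) (mkPP_succAbove τ _)).2 ?_
        simpa using hab)
    have h1 : σ 1 = v := by
      by_contra hne
      obtain ⟨a, ha⟩ := Fin.exists_succAbove_eq hne
      rw [← hv] at ha
      exact Fin.succAbove_ne _ _ (σ.injective ha)
    refine ⟨v, funext fun i => ?_⟩
    rcases eq_one_or i with rfl | ⟨a, rfl⟩
    · exact h1
    · rw [mkExt_succAbove, ← hv]
      simp
  · rintro ⟨v, hv⟩ i j vi vj hi hj
    rw [hv]
    rcases eq_one_or i with rfl | ⟨a, rfl⟩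
    · simp [mkPP_one] at hi
    rcases eq_one_or j with rfl | ⟨b, rfl⟩
    · simp [mkPP_one] at hj
    rw [mkPP_succAbove, Option.some_inj] at hi hj
    subst hi hj
    rw [mkExt_succAbove, mkExt_succAbove]
    exact (Fin.strictMono_succAbove v).lt_iff_lt

theorem ppAvoids_iff_good (p : Fin 4 → Fin 4) (τ : Equiv.Perm (Fin 4)) :
    PPAvoids (mkPP τ) p ↔ Good p τ := by
  constructor
  · intro h v m hm
    let σ : Equiv.Perm (Fin 5) :=
      Equiv.ofBijective _ (Finite.injective_iff_bijective.1 (mkExt_injective τ v))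
    exact h σ ((isExtension_iff τ σ).2 ⟨v, rfl⟩) ((containsPat_iff _ _).2 ⟨m, hm⟩)
  · intro h σ hσ hc
    obtain ⟨v, hv⟩ := (isExtension_iff τ σ).1 hσ
    rw [hv] at hc
    obtain ⟨m, hm⟩ := (containsPat_iff _ _).1 hc
    exact h v m hm

theorem isPPermH_iff (π : Fin 5 → Option (Fin 4)) :
    IsPPermH ({1} : Finset (Fin 5)) π ↔ ∃ τ : Equiv.Perm (Fin 4), mkPP τ = π := by
  constructor
  · rintro ⟨h1, h2⟩
    have h2' : ∀ v : Fin 4, ∃! i : Fin 5, π i = some v := h2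
    have hs : ∀ a : Fin 4, ∃ w : Fin 4, π ((1 : Fin 5).succAbove a) = some w := by
      intro a
      refine Option.ne_none_iff_exists'.1 fun hn => ?_
      exact Fin.succAbove_ne _ _ (Finset.mem_singleton.1 ((h1 _).1 hn))
    choose t ht using hs
    have hinj : Function.Injective t := by
      intro a b hab
      obtain ⟨i, _, hu⟩ := h2' (t a)
      refine Fin.succAbove_right_injective (p := (1 : Fin 5)) ?_
      exact (hu _ (ht a)).trans (hu _ (by rw [hab]; exact ht b)).symm
    refine ⟨Equiv.ofBijective t (Finite.injective_iff_bijective.1 hinj), funext fun i => ?_⟩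
    rcases eq_one_or i with rfl | ⟨a, rfl⟩
    · exact ((h1 1).2 (Finset.mem_singleton.2 rfl)).symm
    · rw [mkPP_succAbove, ht]; rfl
  · rintro ⟨τ, rfl⟩
    constructor
    · intro i
      rcases eq_one_or i with rfl | ⟨a, rfl⟩
      · exact ⟨fun _ => Finset.mem_singleton.2 rfl, fun _ => rfl⟩
      · constructor
        · intro h
          exact absurd ((mkPP_succAbove τ a).symm.trans h) (by simp)
        · intro h
          exact absurd (Finset.mem_singleton.1 h) (Fin.succAbove_ne _ _)
    · intro v
      change ∃! i : Fin 5, mkPP τ i = some (v : Fin 4)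
      refine ⟨(1 : Fin 5).succAbove (τ.symm v), ?_, ?_⟩
      · change mkPP τ ((1 : Fin 5).succAbove (τ.symm v)) = some (v : Fin 4)
        rw [mkPP_succAbove]
        exact congrArg some (τ.apply_symm_apply v)
      · intro j hj
        rcases eq_one_or j with rfl | ⟨b, rfl⟩
        · cases hj
        · have hj' := (mkPP_succAbove τ b).symm.trans hj
          have hv : τ b = v := Option.some.inj hj'
          rw [← hv]
          exact congrArg _ (τ.symm_apply_apply b).symm

theorem mkPP_injective : Function.Injective fun τ : Equiv.Perm (Fin 4) => mkPP τ := by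
  intro τ τ' h
  ext a : 1
  have := congrFun h ((1 : Fin 5).succAbove a)
  simpa [mkPP_succAbove] using this

theorem snH_eq (p : Fin 4 → Fin 4) : snH ({1} : Finset (Fin 5)) p =
    (Finset.univ.filter fun τ : Equiv.Perm (Fin 4) => Good p τ).card := by
  have hset : {π : Fin 5 → Option (Fin 4) | IsPPermH ({1} : Finset (Fin 5)) π ∧ PPAvoids π p} =
      (fun τ : Equiv.Perm (Fin 4) => mkPP τ) ''
        (Finset.univ.filter fun τ : Equiv.Perm (Fin 4) => Good p τ : Finset _) := by
    ext π
    simp only [Set.mem_ofPred_eq, Finset.coe_filter, Finset.mem_univ, true_and, Set.mem_image]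
    rw [isPPermH_iff]
    constructor
    · rintro ⟨⟨τ, rfl⟩, h⟩
      exact ⟨τ, (ppAvoids_iff_good p τ).1 h, rfl⟩
    · rintro ⟨τ, h, rfl⟩
      exact ⟨⟨τ, rfl⟩, (ppAvoids_iff_good p τ).2 h⟩
  have h1 : snH ({1} : Finset (Fin 5)) p = Set.ncard {π : Fin 5 → Option (Fin 4) |
      IsPPermH ({1} : Finset (Fin 5)) π ∧ PPAvoids π p} := rfl
  rw [h1, hset, Set.ncard_image_of_injective _ mkPP_injective, Set.ncard_coe_finset]

/-- The patterns `1342` and `2431` are not strongly 1-Wilf equivalent: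
for `n = 5` and hole set `H = {2}` (position 2, i.e. index 1), there are 13
avoiders of `1342` but 14 avoiders of `2431`. Nevertheless, a partial
permutation avoids `1342` iff its reverse avoids `2431`, so the two patterns
are `k`-Wilf equivalent for every `k`. -/
theorem not_strongly_wilf_1342_2431 :
    snH ({1} : Finset (Fin 5)) (![0, 2, 3, 1] : Fin 4 → Fin 4) = 13 ∧
    snH ({1} : Finset (Fin 5)) (![1, 3, 2, 0] : Fin 4 → Fin 4) = 14 ∧
    (∀ (n : ℕ) (α : Type) [LinearOrder α] (π : Fin n → Option α),
      PPAvoids π (![0, 2, 3, 1] : Fin 4 → Fin 4) ↔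
        PPAvoids (fun t : Fin n => π t.rev) (![1, 3, 2, 0] : Fin 4 → Fin 4)) ∧
    (∀ k n : ℕ,
      snk n k (![0, 2, 3, 1] : Fin 4 → Fin 4) =
        snk n k (![1, 3, 2, 0] : Fin 4 → Fin 4)) := by
  refine ⟨?_, ?_, fun n α _ π => ppAvoids_rev_iff n α π, snk_eq⟩
  · rw [snH_eq]
    decide +kernel
  · rw [snH_eq]
    decide +kernel
end
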